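/- arXiv:2005.12305 — 3 statements merged into one kernel-verified Lean document; each statement's English description precedes it below -/
import Mathlib

section
/- Let n ≥ 2 and 1 ≤ k ≤ n−1. The number of decorated ordered set partitions of type Δ_{k,n} equals the number of fixed-point-free permutations σ of {1,…,n} with exactly k ascents, i.e. with #{i ∈ {1,…,n} : σ(i) > i} = k (so that the remaining n−k positions satisfy σ(i) < i). -/
open Finset

/-- A decorated ordered set partition of type `Δ_{k,n}`: an ordered set partition
`(S_1,…,S_ℓ)` of `{1,…,n}` into nonempty blocks, with integer weights
`1 ≤ s_i ≤ |S_i| − 1` summing to `k`. -/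
structure DOSP (n k : ℕ) where
  len : ℕ
  len_pos : 0 < len
  S : Fin len → Finset (Fin n)
  wt : Fin len → ℕ
  blocks_nonempty : ∀ i, (S i).Nonempty
  blocks_disjoint : ∀ i j, i ≠ j → Disjoint (S i) (S j)
  blocks_cover : ∀ x : Fin n, ∃ i, x ∈ S i
  wt_lower : ∀ i, 1 ≤ wt i
  wt_upper : ∀ i, wt i ≤ (S i).card - 1
  wt_sum : ∑ i, wt i = k

open Polynomial in
/-- The excedance enumerator of the permutations with support exactly `A`. -/
noncomputable def excPoly {α : Type*} [Fintype α] [LinearOrder α] (A : Finset α) : ℤ[X] :=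
  ∑ σ : Equiv.Perm α with σ.support = A, X ^ #{i | i < σ i}

/-- The weighted ordered set partitions of `A`, as lists of pairs (block, weight). -/
def weightedPartitions {α : Type*} [DecidableEq α] (A : Finset α) :
    Finset (List (Finset α × ℕ)) :=
  if A = ∅ then {[]} else
    (A.powerset.erase ∅).attach.biUnion fun B => (Ico 1 #B.1).attach.biUnion fun s =>
      (weightedPartitions (A \ B.1)).image (List.cons (B.1, s.1))
termination_by #A
decreasing_by
  have hB := mem_erase.1 B.2
  exact card_lt_card (sdiff_ssubset (mem_powerset.1 hB.2) (nonempty_iff_ne_empty.2 hB.1))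

section Excedances

variable {α : Type*} [Fintype α] [LinearOrder α]

/-- The cyclic successor on a nonempty finite set `A`. -/
lemma exists_cyclic_succ {A : Finset α} (hA : A.Nonempty) :
    ∃ c : Equiv.Perm α, c.support ⊆ A ∧
      ∀ i ∈ A, ∀ x ∈ A, c i ≤ x ↔ i < x ∨ i = A.max' hA := by
  obtain ⟨m, hm⟩ : ∃ m, #A = m + 1 := ⟨#A - 1, by have := hA.card_pos; omega⟩
  let e := A.orderIsoOfFin hm
  refine ⟨Equiv.Perm.ofSubtype (e.toEquiv.permCongr (finRotate (m + 1))), ?_, ?_⟩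
  · intro i hi
    by_contra h
    exact (Equiv.Perm.mem_support.1 hi) (Equiv.Perm.ofSubtype_apply_of_not_mem _ h)
  · intro i hi x hx
    obtain ⟨a, ha⟩ := e.surjective ⟨i, hi⟩
    obtain ⟨b, hb⟩ := e.surjective ⟨x, hx⟩
    have hmax : (⟨A.max' hA, A.max'_mem hA⟩ : A) = e (Fin.last m) := by
      apply le_antisymm
      · obtain ⟨d, hd⟩ := e.surjective ⟨A.max' hA, A.max'_mem hA⟩
        rw [← hd]
        exact e.monotone (Fin.le_last d)
      · exact A.le_max' _ (e (Fin.last m)).2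
    have hmax' : i = A.max' hA ↔ a = Fin.last m := by
      rw [← e.injective.eq_iff, ha, ← hmax, Subtype.mk.injEq]
    have hlt : i < x ↔ a < b := by
      rw [← e.lt_iff_lt, ha, hb, Subtype.mk_lt_mk]
    have hsymm : e.symm ⟨i, hi⟩ = a := by rw [← ha]; simp
    have hval : Equiv.Perm.ofSubtype (e.toEquiv.permCongr (finRotate (m + 1))) i
        = (e (finRotate (m + 1) a) : α) := by
      rw [Equiv.Perm.ofSubtype_apply_of_mem _ hi]
      simp [Equiv.permCongr_apply, hsymm]
    have hle : (e (finRotate (m + 1) a) : α) ≤ x ↔ finRotate (m + 1) a ≤ b := by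
      rw [← e.le_iff_le, hb]
      rfl
    rw [hval, hle, hmax', hlt]
    by_cases h : a = Fin.last m
    · simp [h]
    · have := coe_finRotate_of_ne_last h
      simp only [h, or_false]
      rw [Fin.le_def, this, Fin.lt_def]
      omega

lemma card_exc_add_card_fixed {A : Finset α} {σ : Equiv.Perm α} (h : σ.support ⊆ A) :
    #{i | i < σ i} + #(A \ σ.support) = #{i ∈ A | i ≤ σ i} := by
  rw [← card_union_of_disjoint]
  · congr 1
    ext i
    have := @h i
    simp only [mem_union, mem_filter, mem_univ, true_and, mem_sdiff, Equiv.Perm.mem_support,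
      not_not, le_iff_lt_or_eq] at this ⊢
    constructor
    · rintro (h1 | ⟨h1, h2⟩)
      · exact ⟨this h1.ne', Or.inl h1⟩
      · exact ⟨h1, Or.inr h2.symm⟩
    · rintro ⟨h1, h2 | h2⟩
      · exact Or.inl h2
      · exact Or.inr ⟨h1, h2.symm⟩
  · rw [Finset.disjoint_left]
    intro i hi
    simp only [mem_filter, mem_univ, true_and, mem_sdiff, Equiv.Perm.mem_support] at hi ⊢
    exact fun hh => hh.2 hi.ne'

/-- Composing with the cyclic successor turns excedances into weak excedances. -/
lemma card_weak_exc_mul_inv {A : Finset α} (hA : A.Nonempty) {c σ : Equiv.Perm α}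
    (hcs : c.support ⊆ A) (hc : ∀ i ∈ A, ∀ x ∈ A, c i ≤ x ↔ i < x ∨ i = A.max' hA)
    (h : σ.support ⊆ A) :
    #{i ∈ A | i ≤ (σ * c⁻¹) i} = #{i | i < σ i} + 1 := by
  have mem_iff {τ : Equiv.Perm α} (hτ : τ.support ⊆ A) (i : α) : τ i ∈ A ↔ i ∈ A := by
    by_cases hi : τ i = i
    · rw [hi]
    · have h1 := Equiv.Perm.mem_support.2 hi
      exact ⟨fun _ => hτ h1, fun _ => hτ (Equiv.Perm.apply_mem_support.2 h1)⟩
  have hmax : A.max' hA ∉ ({i | i < σ i} : Finset α) := by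
    simp only [mem_filter, mem_univ, true_and, not_lt]
    exact A.le_max' _ ((mem_iff h _).2 (A.max'_mem hA))
  rw [← card_insert_of_notMem hmax]
  symm
  rw [← card_map c.toEmbedding]
  congr 1
  ext j
  obtain ⟨i, rfl⟩ := c.surjective j
  rw [mem_map_equiv, Equiv.symm_apply_apply, mem_insert, mem_filter, mem_filter,
    Equiv.Perm.mul_apply, Equiv.Perm.inv_def, Equiv.symm_apply_apply, mem_iff hcs]
  simp only [mem_univ, true_and]
  constructor
  · rintro (rfl | hi)
    · exact ⟨A.max'_mem hA, (hc _ (A.max'_mem hA) _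
        ((mem_iff h _).2 (A.max'_mem hA))).2 (Or.inr rfl)⟩
    · have hiA := h (Equiv.Perm.mem_support.2 hi.ne')
      exact ⟨hiA, (hc _ hiA _ ((mem_iff h _).2 hiA)).2 (Or.inl hi)⟩
  · rintro ⟨hiA, hi⟩
    exact ((hc _ hiA _ ((mem_iff h _).2 hiA)).1 hi).symm

open Polynomial

lemma sum_excPoly_sdiff (A : Finset α) (f : Finset α → ℤ[X]) :
    ∑ B ∈ A.powerset, excPoly (A \ B) * f B =
      ∑ σ : Equiv.Perm α with σ.support ⊆ A, X ^ #{i | i < σ i} * f (A \ σ.support) := by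
  rw [← sum_fiberwise_of_maps_to (g := fun σ : Equiv.Perm α => A \ σ.support) (t := A.powerset)
    (fun σ _ => mem_powerset.2 sdiff_subset)]
  refine sum_congr rfl fun B hB => ?_
  rw [mem_powerset] at hB
  rw [excPoly, sum_mul]
  refine sum_congr ?_ ?_
  · ext σ
    simp only [mem_filter, mem_univ, true_and]
    constructor
    · intro h
      rw [h]
      exact ⟨sdiff_subset, Finset.sdiff_sdiff_eq_self hB⟩
    · rintro ⟨h, rfl⟩
      exact (Finset.sdiff_sdiff_eq_self h).symm
  · intro σ hσ
    rw [(mem_filter.1 hσ).2]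

lemma sum_exc_mul_fixed {A : Finset α} (hA : A.Nonempty) :
    ∑ σ : Equiv.Perm α with σ.support ⊆ A, (X : ℤ[X]) ^ #{i | i < σ i} * X ^ #(A \ σ.support) =
      ∑ σ : Equiv.Perm α with σ.support ⊆ A, X ^ #{i | i < σ i} * X := by
  obtain ⟨c, hcs, hc⟩ := exists_cyclic_succ hA
  have hmul {σ τ : Equiv.Perm α} (h1 : σ.support ⊆ A) (h2 : τ.support ⊆ A) :
      (σ * τ).support ⊆ A :=
    (Equiv.Perm.support_mul_le σ τ).trans (union_subset h1 h2)
  have hcs' : (c⁻¹).support ⊆ A := by rwa [Equiv.Perm.support_inv]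
  symm
  refine sum_bij' (fun σ _ => σ * c⁻¹) (fun σ _ => σ * c) ?_ ?_ ?_ ?_ ?_
  · intro σ hσ
    exact mem_filter.2 ⟨mem_univ _, hmul (mem_filter.1 hσ).2 hcs'⟩
  · intro σ hσ
    exact mem_filter.2 ⟨mem_univ _, hmul (mem_filter.1 hσ).2 hcs⟩
  · intro σ _
    simp
  · intro σ _
    simp
  · intro σ hσ
    have h := (mem_filter.1 hσ).2
    rw [← pow_add, card_exc_add_card_fixed (hmul h hcs'), card_weak_exc_mul_inv hA hcs hc h,
      pow_succ]

lemma excPoly_empty : excPoly (∅ : Finset α) = 1 := by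
  simp [excPoly, Equiv.Perm.support_eq_empty_iff, filter_eq']

lemma sub_one_mul_sum_Ico (m : ℕ) :
    (X - 1 : ℤ[X]) * ∑ s ∈ Ico 1 m, X ^ s = X ^ m - X + if m = 0 then X - 1 else 0 := by
  rcases m with _ | m
  · simp
  · rw [mul_comm, geom_sum_Ico_mul _ (by omega)]
    simp

lemma excPoly_eq_sum {A : Finset α} (hA : A.Nonempty) :
    excPoly A = ∑ B ∈ A.powerset, excPoly (A \ B) * ∑ s ∈ Ico 1 #B, X ^ s := by
  have hne : (X - 1 : ℤ[X]) ≠ 0 := X_sub_C_ne_zero 1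
  apply mul_left_cancel₀ hne
  have h := (sum_excPoly_sdiff A fun B => X ^ #B).trans
    ((sum_exc_mul_fixed hA).trans (sum_excPoly_sdiff A fun _ => X).symm)
  symm
  calc (X - 1) * ∑ B ∈ A.powerset, excPoly (A \ B) * ∑ s ∈ Ico 1 #B, X ^ s
      = ∑ B ∈ A.powerset, (excPoly (A \ B) * X ^ #B - excPoly (A \ B) * X +
          if B = ∅ then (X - 1) * excPoly A else 0) := by
        rw [mul_sum]
        refine sum_congr rfl fun B _ => ?_
        rw [mul_left_comm, sub_one_mul_sum_Ico]
        by_cases hB : B = ∅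
        · subst hB
          simp
          ring
        · simp [hB, mul_sub]
    _ = (X - 1) * excPoly A := by
        rw [sum_add_distrib, sum_sub_distrib, h, sub_self, zero_add, sum_ite_eq']
        simp

end Excedances

section WeightedPartitions

variable {α : Type*} [DecidableEq α]

lemma nil_mem_weightedPartitions {A : Finset α} : [] ∈ weightedPartitions A ↔ A = ∅ := by
  rw [weightedPartitions]
  split_ifs with h <;> simp [h]

lemma cons_mem_weightedPartitions {A : Finset α} {p : Finset α × ℕ}
    {l : List (Finset α × ℕ)} :
    p :: l ∈ weightedPartitions A ↔
      p.1 ⊆ A ∧ (1 ≤ p.2 ∧ p.2 < #p.1) ∧ l ∈ weightedPartitions (A \ p.1) := by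
  obtain ⟨B, s⟩ := p
  rw [weightedPartitions]
  split_ifs with h
  · subst h
    simp only [mem_singleton, reduceCtorEq, subset_empty, false_iff]
    rintro ⟨rfl, h, -⟩
    simp at h
  · simp only [mem_biUnion, mem_attach, true_and, Subtype.exists, mem_image, mem_erase,
      mem_powerset, mem_Ico, List.cons.injEq, Prod.mk.injEq]
    constructor
    · rintro ⟨B, hB, s, hs, l, hl, ⟨rfl, rfl⟩, rfl⟩
      exact ⟨hB.2, hs, hl⟩
    · rintro ⟨hB, hs, hl⟩
      have hne : B ≠ ∅ := by
        rintro rfl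
        simp at hs
      exact ⟨B, ⟨hne, hB⟩, s, hs, l, hl, ⟨rfl, rfl⟩, rfl⟩

lemma mem_weightedPartitions {A : Finset α} {l : List (Finset α × ℕ)} :
    l ∈ weightedPartitions A ↔ (∀ p ∈ l, 1 ≤ p.2 ∧ p.2 < #p.1) ∧
      l.Pairwise (fun p q => Disjoint p.1 q.1) ∧ ∀ x, x ∈ A ↔ ∃ p ∈ l, x ∈ p.1 := by
  induction l generalizing A with
  | nil => simp [nil_mem_weightedPartitions, eq_empty_iff_forall_notMem]
  | cons p l ih =>
    rw [cons_mem_weightedPartitions, ih]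
    simp only [forall_eq_or_imp, List.pairwise_cons, List.mem_cons, exists_eq_or_imp, mem_sdiff,
      Finset.disjoint_left]
    constructor
    · rintro ⟨h1, h2, h3, h4, h5⟩
      refine ⟨⟨h2, h3⟩, ⟨fun q hq x hx hxq => ((h5 x).2 ⟨q, hq, hxq⟩).2 hx, h4⟩, fun x => ?_⟩
      rw [← h5]
      have := @h1 x
      tauto
    · rintro ⟨⟨h2, h3⟩, ⟨h4, h5⟩, h6⟩
      refine ⟨fun x hx => (h6 x).2 (Or.inl hx), h2, h3, h5, fun x => ?_⟩
      rw [h6]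
      constructor
      · tauto
      · rintro ⟨q, hq, hx⟩
        exact ⟨Or.inr ⟨q, hq, hx⟩, fun hp => h4 q hq hp hx⟩

open Polynomial

lemma sum_weightedPartitions {A : Finset α} (hA : A.Nonempty) :
    ∑ l ∈ weightedPartitions A, (X : ℤ[X]) ^ (l.map Prod.snd).sum =
      ∑ B ∈ A.powerset, (∑ l ∈ weightedPartitions (A \ B), X ^ (l.map Prod.snd).sum) *
        ∑ s ∈ Ico 1 #B, X ^ s := by
  rw [weightedPartitions, if_neg hA.ne_empty, sum_biUnion,
    ← sum_erase A.powerset (a := ∅) (by simp), ← sum_attach (A.powerset.erase ∅)]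
  · refine sum_congr rfl fun B _ => ?_
    rw [sum_biUnion, mul_sum, ← sum_attach (Ico 1 _)]
    · refine sum_congr rfl fun s _ => ?_
      rw [sum_image fun _ _ _ _ h => List.cons_injective h, sum_mul]
      refine sum_congr rfl fun l _ => ?_
      simp [pow_add, mul_comm]
    · intro s _ t _ hst
      rw [Function.onFun, Finset.disjoint_left]
      intro l hl hl'
      obtain ⟨_, -, rfl⟩ := mem_image.1 hl
      obtain ⟨_, -, h⟩ := mem_image.1 hl'
      simp only [List.cons.injEq, Prod.mk.injEq] at h
      exact hst (Subtype.ext h.1.2.symm)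
  · intro B _ C _ hBC
    rw [Function.onFun, Finset.disjoint_left]
    intro l hl hl'
    simp only [mem_biUnion, mem_image] at hl hl'
    obtain ⟨_, -, _, -, rfl⟩ := hl
    obtain ⟨_, -, _, -, h⟩ := hl'
    simp only [List.cons.injEq, Prod.mk.injEq] at h
    exact hBC (Subtype.ext h.1.1.symm)

end WeightedPartitions

open Polynomial in
/-- Both enumerators satisfy the same recursion. -/
lemma sum_weightedPartitions_eq_excPoly {α : Type*} [Fintype α] [LinearOrder α]
    (A : Finset α) :
    ∑ l ∈ weightedPartitions A, (X : ℤ[X]) ^ (l.map Prod.snd).sum = excPoly A := by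
  induction A using Finset.strongInduction with
  | H A ih =>
    rcases A.eq_empty_or_nonempty with rfl | hA
    · rw [excPoly_empty, weightedPartitions]
      simp
    · rw [sum_weightedPartitions hA, excPoly_eq_sum hA]
      refine sum_congr rfl fun B hB => ?_
      rcases B.eq_empty_or_nonempty with rfl | hB'
      · simp
      · rw [ih _ (sdiff_ssubset (mem_powerset.1 hB) hB')]

open Polynomial in
lemma coeff_sum_X_pow {ι : Type*} (s : Finset ι) (f : ι → ℕ) (k : ℕ) :
    (∑ i ∈ s, (X : ℤ[X]) ^ f i).coeff k = #{i ∈ s | f i = k} := by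
  simp [coeff_X_pow, eq_comm]

/-- The list of blocks and weights of a decorated ordered set partition. -/
def DOSP.toList {n k : ℕ} (P : DOSP n k) : List (Finset (Fin n) × ℕ) :=
  List.ofFn fun i => (P.S i, P.wt i)

lemma DOSP.toList_injective {n k : ℕ} : Function.Injective (DOSP.toList (n := n) (k := k)) := by
  rintro ⟨len, _, S, wt, _, _, _, _, _, _⟩ ⟨len', _, S', wt', _, _, _, _, _, _⟩ h
  have hlen : len = len' := by simpa [DOSP.toList] using congrArg List.length h
  subst hlen
  have h' := List.ofFn_injective h
  have hS : S = S' := funext fun i => congrArg Prod.fst (congrFun h' i)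
  have hwt : wt = wt' := funext fun i => congrArg Prod.snd (congrFun h' i)
  subst hS hwt
  rfl

lemma DOSP.toList_mem {n k : ℕ} (P : DOSP n k) :
    P.toList ∈ {l ∈ weightedPartitions (univ : Finset (Fin n)) | (l.map Prod.snd).sum = k} := by
  rw [mem_filter, mem_weightedPartitions]
  refine ⟨⟨?_, ?_, ?_⟩, ?_⟩
  · simp only [DOSP.toList, List.forall_mem_ofFn_iff]
    intro i
    have h1 := P.wt_lower i
    have h2 := P.wt_upper i
    exact ⟨h1, by omega⟩
  · rw [DOSP.toList, List.pairwise_ofFn]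
    exact fun i j hij => P.blocks_disjoint i j hij.ne
  · intro x
    simpa [DOSP.toList, List.mem_ofFn] using P.blocks_cover x
  · simpa [DOSP.toList, List.map_ofFn, List.sum_ofFn] using P.wt_sum

lemma DOSP.exists_toList_eq {n k : ℕ} (hn : 0 < n) {l : List (Finset (Fin n) × ℕ)}
    (hl : l ∈ {l ∈ weightedPartitions (univ : Finset (Fin n)) | (l.map Prod.snd).sum = k}) :
    ∃ P : DOSP n k, P.toList = l := by
  rw [mem_filter, mem_weightedPartitions] at hl
  obtain ⟨⟨hw, hd, hc⟩, hs⟩ := hl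
  have hw' (i : Fin l.length) := hw (l.get i) (List.get_mem l i)
  rw [List.pairwise_iff_get] at hd
  refine ⟨⟨l.length, ?_, fun i => (l.get i).1, fun i => (l.get i).2, ?_, ?_, ?_, ?_, ?_, ?_⟩, ?_⟩
  · obtain ⟨p, hp, -⟩ := (hc ⟨0, hn⟩).1 (mem_univ _)
    exact List.length_pos_of_mem hp
  · intro i
    have := hw' i
    exact card_pos.1 (by omega)
  · intro i j hij
    rcases lt_or_gt_of_ne hij with h | h
    · exact hd i j h
    · exact (hd j i h).symm
  · intro x
    obtain ⟨p, hp, hx⟩ := (hc x).1 (mem_univ _)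
    obtain ⟨i, rfl⟩ := List.mem_iff_get.1 hp
    exact ⟨i, hx⟩
  · exact fun i => (hw' i).1
  · intro i
    have := hw' i
    omega
  · rw [← hs, ← List.sum_ofFn]
    congr 1
    exact List.ext_get (by simp) (by simp)
  · exact List.ofFn_get l

lemma DOSP.card_eq {n k : ℕ} (hn : 0 < n) :
    Nat.card (DOSP n k) =
      #{l ∈ weightedPartitions (univ : Finset (Fin n)) | (l.map Prod.snd).sum = k} := by
  rw [← Nat.card_eq_finsetCard]
  exact Nat.card_eq_of_bijective (fun P => ⟨P.toList, P.toList_mem⟩)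
    ⟨fun P Q h => DOSP.toList_injective (congrArg Subtype.val h), fun ⟨_, hl⟩ =>
      (DOSP.exists_toList_eq hn hl).imp fun _ hP => Subtype.ext hP⟩

/-- the number of decorated ordered set partitions of type `Δ_{k,n}`
equals the number of fixed-point-free permutations of `{1,…,n}` with exactly `k`
ascents (positions with `σ(i) > i`). -/
theorem stmt8 {n k : ℕ} (hn : 2 ≤ n) (hk1 : 1 ≤ k) (hk2 : k ≤ n - 1) :
    Nat.card (DOSP n k) =
      Nat.card {σ : Equiv.Perm (Fin n) //
        (∀ i, σ i ≠ i) ∧ (univ.filter fun i => i < σ i).card = k} := by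
  have h := congrArg (Polynomial.coeff · k)
    (sum_weightedPartitions_eq_excPoly (univ : Finset (Fin n)))
  simp only [excPoly, coeff_sum_X_pow, Nat.cast_inj] at h
  rw [DOSP.card_eq (by omega), h, Nat.card_eq_fintype_card, Fintype.card_subtype, filter_filter]
  congr 1
  ext σ
  simp [eq_univ_iff_forall]
end

section
/- Let n ≥ 2 and 1 ≤ k ≤ n−1. The number of decorated ordered set partitions ((S_1,…,S_ℓ),(s_1,…,s_ℓ)) of type Δ_{k,n} with 1 ∈ S_1 equals the Eulerian number A_{k−1,n−1}, i.e. the number of permutations σ of {1,…,n−1} having exactly k−1 descents, where a descent of σ is an index i ∈ {1,…,n−2} with σ(i) > σ(i+1). -/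
open Finset

/-- The number of descents of a permutation of `Fin m`. -/
def descentCount {m : ℕ} (σ : Equiv.Perm (Fin m)) : ℕ :=
  (univ.filter fun i : Fin m => ∃ j : Fin m, (j : ℕ) = (i : ℕ) + 1 ∧ σ j < σ i).card

/-- The permutation of `Fin (m + 1)` with first value `r` whose remaining values are in the same
relative order as those of `τ`. -/
def consPerm {m : ℕ} (r : Fin (m + 1)) (τ : Equiv.Perm (Fin m)) : Equiv.Perm (Fin (m + 1)) :=
  ((finSuccEquiv' 0).trans (Equiv.optionCongr τ)).trans (finSuccEquiv' r).symm

theorem consPerm_zero {m : ℕ} (r : Fin (m + 1)) (τ : Equiv.Perm (Fin m)) :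
    consPerm r τ 0 = r := by
  simp [consPerm]

theorem consPerm_succ {m : ℕ} (r : Fin (m + 1)) (τ : Equiv.Perm (Fin m)) (i : Fin m) :
    consPerm r τ i.succ = r.succAbove (τ i) := by
  have : finSuccEquiv' (0 : Fin (m + 1)) i.succ = some i := by
    rw [← Fin.succAbove_zero_apply, finSuccEquiv'_succAbove]
  simp [consPerm, this]

theorem consPerm_bijective (m : ℕ) :
    Function.Bijective fun p : Fin (m + 1) × Equiv.Perm (Fin m) => consPerm p.1 p.2 := by
  rw [Fintype.bijective_iff_injective_and_card]
  constructor
  · rintro ⟨r, τ⟩ ⟨r', τ'⟩ h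
    have h0 := DFunLike.congr_fun h 0
    simp only [consPerm_zero] at h0
    subst h0
    congr 1
    ext i : 1
    have hi := DFunLike.congr_fun h i.succ
    simpa only [consPerm_succ, Fin.succAbove_right_inj] using hi
  · simp [Fintype.card_perm, Nat.factorial_succ]

theorem descentCount_consPerm {m : ℕ} (r : Fin (m + 1)) (τ : Equiv.Perm (Fin m)) :
    descentCount (consPerm r τ) =
      (if ∃ i : Fin m, (i : ℕ) = 0 ∧ (τ i : ℕ) < r then 1 else 0) + descentCount τ := by
  unfold descentCount
  rw [Fin.card_filter_univ_succ]
  have h0 : (∃ j : Fin (m + 1), (j : ℕ) = ((0 : Fin (m + 1)) : ℕ) + 1 ∧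
      consPerm r τ j < consPerm r τ 0) ↔ ∃ i : Fin m, (i : ℕ) = 0 ∧ (τ i : ℕ) < r := by
    rw [Fin.exists_fin_succ]
    simp only [consPerm_zero, consPerm_succ, Fin.succAbove_lt_iff_castSucc_lt]
    simp [Fin.lt_def, -Fin.val_fin_lt]
  have h1 : ∀ i : Fin m, (∃ j : Fin (m + 1), (j : ℕ) = (i.succ : ℕ) + 1 ∧
      consPerm r τ j < consPerm r τ i.succ) ↔ ∃ j : Fin m, (j : ℕ) = (i : ℕ) + 1 ∧ τ j < τ i := by
    intro i
    rw [Fin.exists_fin_succ]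
    simp [consPerm_succ]
  simp only [h0, h1]
  split_ifs <;> omega

open Polynomial in
/-- The Eulerian polynomial, the descent generating function of permutations of `Fin m`. -/
noncomputable def eulerianPoly (m : ℕ) : ℚ[X] :=
  ∑ σ : Equiv.Perm (Fin m), X ^ descentCount σ

open Polynomial in
/-- The descent generating function of the words obtained by prepending to a permutation of `Fin m`
a letter lying just below the value `r`. -/
noncomputable def prependedEulerianPoly (m r : ℕ) : ℚ[X] :=
  ∑ τ : Equiv.Perm (Fin m),
    (if ∃ i : Fin m, (i : ℕ) = 0 ∧ (τ i : ℕ) < r then X else 1) * X ^ descentCount τ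

open Polynomial in
theorem prependedEulerianPoly_succ_succ {m r : ℕ} (hr : r ≤ m) :
    prependedEulerianPoly (m + 1) (r + 1) =
      prependedEulerianPoly (m + 1) r + (X - 1) * prependedEulerianPoly m r := by
  rw [← sub_eq_iff_eq_add']
  unfold prependedEulerianPoly
  rw [← sum_sub_distrib, ← (consPerm_bijective m).sum_comp]
  rw [Fintype.sum_prod_type, Finset.sum_eq_single (⟨r, by omega⟩ : Fin (m + 1))]
  · rw [mul_sum]
    refine sum_congr rfl fun τ _ => ?_
    simp only [Fin.exists_fin_succ, consPerm_zero, descentCount_consPerm]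
    simp only [Fin.val_zero, true_and, Fin.val_succ]
    simp only [lt_add_iff_pos_right, Nat.lt_one_iff, pos_of_gt, true_or, if_true, lt_irrefl,
      false_or, Nat.add_eq_zero_iff, one_ne_zero, and_false, false_and, exists_false, if_false]
    split_ifs <;> ring
  · intro s _ hs
    refine sum_eq_zero fun τ _ => ?_
    have hs' : (s : ℕ) ≠ r := fun h => hs (Fin.ext h)
    have : (s : ℕ) ≤ r ↔ (s : ℕ) < r := by omega
    simp [consPerm_zero, this]
  · simp

theorem prependedEulerianPoly_zero (m : ℕ) : prependedEulerianPoly m 0 = eulerianPoly m := by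
  simp [prependedEulerianPoly, eulerianPoly]

open Polynomial in
theorem prependedEulerianPoly_eq_sum (r m : ℕ) (hr : r ≤ m) :
    prependedEulerianPoly m r =
      ∑ j ∈ range (r + 1), (r.choose j : ℚ[X]) * (X - 1) ^ j * eulerianPoly (m - j) := by
  induction r generalizing m with
  | zero => simp [prependedEulerianPoly_zero]
  | succ r ih =>
    obtain ⟨m, rfl⟩ : ∃ p, m = p + 1 := ⟨m - 1, by omega⟩
    rw [prependedEulerianPoly_succ_succ (by omega), ih _ (by omega), ih _ (by omega),
      sum_range_succ' _ (r + 1)]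
    have hext : ∑ j ∈ range (r + 1), (r.choose j : ℚ[X]) * (X - 1) ^ j * eulerianPoly (m + 1 - j) =
        ∑ j ∈ range (r + 1 + 1), (r.choose j : ℚ[X]) * (X - 1) ^ j * eulerianPoly (m + 1 - j) := by
      rw [sum_range_succ _ (r + 1)]
      simp
    rw [hext, sum_range_succ' _ (r + 1), mul_sum, add_right_comm, ← sum_add_distrib]
    simp only [Nat.choose_succ_succ, Nat.add_sub_add_right, Nat.choose_zero_right]
    congr 1
    refine sum_congr rfl fun j _ => ?_
    push_cast
    ring

open Polynomial in
theorem eulerianPoly_recurrence {m : ℕ} (hm : 0 < m) :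
    X * eulerianPoly m =
      ∑ j ∈ range (m + 1), (m.choose j : ℚ[X]) * (X - 1) ^ j * eulerianPoly (m - j) := by
  rw [← prependedEulerianPoly_eq_sum m m le_rfl, prependedEulerianPoly, eulerianPoly, mul_sum]
  refine sum_congr rfl fun τ _ => ?_
  rw [if_pos ⟨⟨0, hm⟩, rfl, (τ _).isLt⟩]

theorem eulerianPoly_zero : eulerianPoly 0 = 1 := by
  simp [eulerianPoly, descentCount]

open PowerSeries in
/-- The exponential generating function of a sequence. -/
noncomputable def egf {R : Type*} [CommRing R] [Algebra ℚ R] (b : ℕ → R) : R⟦X⟧ :=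
  PowerSeries.mk fun n => algebraMap ℚ R (1 / n.factorial) * b n

open PowerSeries in
theorem derivative_egf {R : Type*} [CommRing R] [Algebra ℚ R] (b : ℕ → R) :
    d⁄dX R (egf b) = egf fun n => b (n + 1) := by
  ext n
  simp only [coeff_derivative, egf, coeff_mk]
  have : algebraMap ℚ R (1 / n.factorial) =
      algebraMap ℚ R (1 / (n + 1).factorial) * ((n : R) + 1) := by
    rw [show ((n : R) + 1) = algebraMap ℚ R (n + 1) by simp, ← map_mul]
    congr 1
    rw [Nat.factorial_succ]
    have := Nat.factorial_ne_zero n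
    push_cast
    field_simp
  rw [this]
  ring

theorem Derivation.leibniz_prod {R A ι : Type*} [CommSemiring R] [CommSemiring A] [Algebra R A]
    [DecidableEq ι] (D : Derivation R A A) (s : Finset ι) (f : ι → A) :
    D (∏ i ∈ s, f i) = ∑ i ∈ s, (∏ j ∈ s.erase i, f j) • D (f i) := by
  induction s using Finset.induction_on with
  | empty => simp
  | insert a s ha ih =>
    rw [prod_insert ha, sum_insert ha, erase_insert ha, D.leibniz, ih, add_comm, smul_sum]
    congr 1
    refine sum_congr rfl fun i hi => ?_
    have hia : a ≠ i := fun h => ha (h ▸ hi)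
    rw [erase_insert_of_ne hia, prod_insert (fun h => ha (mem_of_mem_erase h)), smul_smul]

open PowerSeries in
/-- The coefficients of a product of exponential generating functions enumerate maps to the index
set, weighted by the sizes of their fibres. -/
theorem sum_prod_card_fiber {R ι : Type*} [CommRing R] [Algebra ℚ R] [Fintype ι] [DecidableEq ι]
    (n : ℕ) (b : ι → ℕ → R) :
    ∑ f : Fin n → ι, ∏ i, b i (univ.filter fun x => f x = i).card =
      n.factorial * coeff n (∏ i, egf (b i)) := by
  induction n generalizing b with
  | zero =>
    simp [egf, coeff_zero_eq_constantCoeff, map_prod, ← coeff_zero_eq_constantCoeff_apply]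
  | succ n ih =>
    have hcoeff : ((n + 1).factorial : R) * coeff (n + 1) (∏ i, egf (b i)) =
        n.factorial * coeff n (d⁄dX R (∏ i, egf (b i))) := by
      rw [coeff_derivative, Nat.factorial_succ]
      push_cast
      ring
    rw [hcoeff, Derivation.leibniz_prod, map_sum, mul_sum,
      ← (Fin.consEquiv fun _ : Fin (n + 1) => ι).sum_comp, Fintype.sum_prod_type]
    refine sum_congr rfl fun i _ => ?_
    have hprod : (∏ j ∈ univ.erase i, egf (b j)) • d⁄dX R (egf (b i)) =
        ∏ j, egf (Function.update b i (fun m => b i (m + 1)) j) := by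
      rw [← mul_prod_erase _ _ (mem_univ i), smul_eq_mul, mul_comm, derivative_egf]
      congr 1
      · simp
      · refine prod_congr rfl fun j hj => ?_
        rw [Function.update_of_ne (ne_of_mem_erase hj)]
    rw [hprod, ← ih]
    refine sum_congr rfl fun f _ => prod_congr rfl fun j _ => ?_
    rw [Fin.card_filter_univ_succ]
    by_cases hj : j = i
    · subst hj
      simp
    · have : i ≠ j := Ne.symm hj
      simp [hj, this]

open PowerSeries in
theorem egf_pow {R : Type*} [CommRing R] [Algebra ℚ R] (a : R) :
    egf (fun n => a ^ n) = rescale a (exp R) := by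
  ext n
  simp [egf, coeff_rescale, mul_comm]

open PowerSeries in
theorem egf_pow_mul_egf {R : Type*} [CommRing R] [Algebra ℚ R] (a : R) (b : ℕ → R) :
    egf (fun n => a ^ n) * egf b =
      egf fun n => ∑ j ∈ range (n + 1), (n.choose j : R) * a ^ j * b (n - j) := by
  ext n
  simp only [coeff_mul, egf, coeff_mk]
  rw [Nat.sum_antidiagonal_eq_sum_range_succ_mk, mul_sum]
  refine sum_congr rfl fun j hj => ?_
  have hjn : j ≤ n := by simpa [Nat.lt_succ_iff] using hj
  have : algebraMap ℚ R (1 / j.factorial) * algebraMap ℚ R (1 / (n - j).factorial) =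
      algebraMap ℚ R (1 / n.factorial) * (n.choose j : R) := by
    rw [← map_natCast (algebraMap ℚ R) (n.choose j), ← map_mul, ← map_mul, Nat.cast_choose ℚ hjn]
    congr 1
    have h1 := Nat.factorial_ne_zero n
    have h2 := Nat.factorial_ne_zero j
    have h3 := Nat.factorial_ne_zero (n - j)
    field_simp
  linear_combination a ^ j * b (n - j) * this

open Polynomial in
/-- The generating function of the admissible weights of a block of size `m`. -/
noncomputable def blockPoly (m : ℕ) : ℚ[X] :=
  ∑ j ∈ Ico 1 m, X ^ j

open Polynomial in
theorem X_sub_one_mul_blockPoly_succ (m : ℕ) : (X - 1) * blockPoly (m + 1) = X ^ (m + 1) - X := by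
  unfold blockPoly
  rw [mul_comm, geom_sum_Ico_mul _ (by omega), pow_one]

theorem blockPoly_zero : blockPoly 0 = 0 := by simp [blockPoly]

open PowerSeries in
theorem egf_eulerianPoly :
    egf (fun n => (Polynomial.X - 1 : Polynomial ℚ) ^ n) * egf eulerianPoly =
      C (Polynomial.X : Polynomial ℚ) * egf eulerianPoly + C (1 - Polynomial.X) := by
  rw [egf_pow_mul_egf]
  ext1 n
  rcases n with _ | n
  · simp [egf, eulerianPoly_zero]
  · rw [egf, coeff_mk, ← eulerianPoly_recurrence n.succ_pos]
    simp only [egf, map_add, coeff_C_mul, coeff_mk, coeff_C, Nat.add_eq_zero_iff, one_ne_zero,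
      and_false, if_false]
    ring

open PowerSeries in
theorem egf_blockPoly :
    C (Polynomial.X - 1 : Polynomial ℚ) * (1 - egf blockPoly) =
      C (Polynomial.X : Polynomial ℚ) * egf (fun n => (1 : Polynomial ℚ) ^ n) -
        egf fun n => (Polynomial.X : Polynomial ℚ) ^ n := by
  ext1 n
  rcases n with _ | n
  · simp [egf, blockPoly_zero]
  · have := X_sub_one_mul_blockPoly_succ n
    simp only [egf, coeff_C_mul, map_sub (coeff _), coeff_mk, coeff_one, Nat.add_eq_zero_iff, one_ne_zero,
      and_false, if_false]
    linear_combination -(algebraMap ℚ (Polynomial ℚ) (1 / (n + 1).factorial)) * this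

open PowerSeries in
theorem egf_blockPoly_succ :
    C (Polynomial.X - 1 : Polynomial ℚ) * egf (fun n => blockPoly (n + 1)) =
      C (Polynomial.X : Polynomial ℚ) * (egf (fun n => (Polynomial.X : Polynomial ℚ) ^ n) -
        egf fun n => (1 : Polynomial ℚ) ^ n) := by
  ext1 n
  have := X_sub_one_mul_blockPoly_succ n
  simp only [egf, coeff_C_mul, map_sub (coeff n), coeff_mk]
  linear_combination (algebraMap ℚ (Polynomial ℚ) (1 / n.factorial)) * this

open PowerSeries in
theorem one_sub_egf_blockPoly_mul :
    (1 - egf blockPoly) * (C (Polynomial.X : Polynomial ℚ) * (egf eulerianPoly - 1)) =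
      egf fun n => blockPoly (n + 1) := by
  have hne : C (Polynomial.X - 1 : Polynomial ℚ) ≠ 0 := by
    rw [Ne, map_eq_zero_iff _ (C_injective)]
    exact Polynomial.X_sub_C_ne_zero (1 : ℚ)
  apply mul_left_cancel₀ hne
  have hexp : egf (fun n => (1 : Polynomial ℚ) ^ n) *
      egf (fun n => (Polynomial.X - 1 : Polynomial ℚ) ^ n) =
        egf fun n => (Polynomial.X : Polynomial ℚ) ^ n := by
    rw [egf_pow, egf_pow, egf_pow, exp_mul_exp_eq_exp_add, add_sub_cancel]
  have hA := egf_eulerianPoly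
  rw [← mul_assoc, egf_blockPoly, egf_blockPoly_succ, ← hexp]
  simp only [map_sub, map_one] at hA ⊢
  linear_combination -(C (Polynomial.X : Polynomial ℚ)) * egf (fun n => (1 : Polynomial ℚ) ^ n) * hA

open PowerSeries in
theorem X_dvd_egf_blockPoly : (PowerSeries.X : (Polynomial ℚ)⟦X⟧) ∣ egf blockPoly := by
  rw [X_dvd_iff, ← coeff_zero_eq_constantCoeff_apply]
  simp [egf, blockPoly_zero]

open PowerSeries in
/-- The Eulerian polynomial as a sum over ordered set partitions of `Fin (N + 1)` with `0` in the
first block. -/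
theorem X_mul_eulerianPoly_eq_sum {N : ℕ} (hN : 0 < N) :
    (Polynomial.X : Polynomial ℚ) * eulerianPoly N =
      ∑ l ∈ range (N + 1), ∑ f : Fin (N + 1) → Fin (l + 1),
        if f 0 = 0 then ∏ i, blockPoly (univ.filter fun x => f x = i).card else 0 := by
  set B := egf blockPoly with hB
  set E := C (Polynomial.X : Polynomial ℚ) * (egf eulerianPoly - 1) with hE
  have hfirst : ∀ l : ℕ, (∑ f : Fin (N + 1) → Fin (l + 1),
      if f 0 = 0 then ∏ i, blockPoly (univ.filter fun x => f x = i).card else 0) =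
        N.factorial * coeff N (egf (fun n => blockPoly (n + 1)) * B ^ l) := by
    intro l
    have h := sum_prod_card_fiber N
      (Fin.cons (fun n => blockPoly (n + 1)) fun _ : Fin l => blockPoly : Fin (l + 1) → ℕ → _)
    rw [Fin.prod_univ_succ] at h
    simp only [Fin.cons_zero, Fin.cons_succ, prod_const, card_univ, Fintype.card_fin] at h
    rw [← h, ← (Fin.consEquiv fun _ : Fin (N + 1) => Fin (l + 1)).sum_comp, Fintype.sum_prod_type,
      Finset.sum_eq_single 0]
    · refine sum_congr rfl fun g _ => ?_
      simp [Fin.prod_univ_succ, Fin.card_filter_univ_succ, (Fin.succ_ne_zero _).symm]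
    · intro r _ hr
      simp [hr]
    · simp
  have hgeom : E = egf (fun n => blockPoly (n + 1)) * (∑ l ∈ range (N + 1), B ^ l) +
      E * B ^ (N + 1) := by
    have h1 := one_sub_egf_blockPoly_mul
    rw [← hB, ← hE] at h1
    have h2 := mul_neg_geom_sum B (N + 1)
    rw [← h1]
    linear_combination -E * h2
  have hzero : coeff N (E * B ^ (N + 1)) = 0 :=
    X_pow_dvd_iff.mp ((pow_dvd_pow_of_dvd X_dvd_egf_blockPoly (N + 1)).mul_left E) N (by omega)
  have hcoeff : coeff N E =
      algebraMap ℚ (Polynomial ℚ) (1 / N.factorial) * (Polynomial.X * eulerianPoly N) := by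
    rw [hE, coeff_C_mul, map_sub, coeff_one, if_neg hN.ne', egf, coeff_mk]
    ring
  have hfac : (N.factorial : Polynomial ℚ) * algebraMap ℚ (Polynomial ℚ) (1 / N.factorial) = 1 := by
    rw [← map_natCast (algebraMap ℚ (Polynomial ℚ)), ← map_mul, mul_one_div_cancel, map_one]
    exact_mod_cast N.factorial_ne_zero
  simp only [hfirst]
  rw [← mul_sum, ← map_sum, ← mul_sum]
  have := congrArg (coeff N) hgeom
  rw [map_add, hzero, add_zero, hcoeff] at this
  rw [← this, ← mul_assoc, hfac, one_mul]

/-- The weightings `w` of the blocks of the ordered set partition given by `f` for which each block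
has an admissible weight and the total weight is `k`. -/
def weightings {n l : ℕ} (f : Fin n → Fin l) (k : ℕ) : Finset (Fin l → ℕ) :=
  (Fintype.piFinset fun i => Ico 1 (univ.filter fun x => f x = i).card).filter
    fun w => ∑ i, w i = k

/-- Encodings of decorated ordered set partitions with `0` in the first block by the number of
blocks, the map sending each element to the index of its block, and the weights. -/
abbrev DOSPCode (N k : ℕ) : Type :=
  Σ l : Fin (N + 1), Σ f : {f : Fin (N + 1) → Fin (l + 1) // f 0 = 0}, weightings f.1 k

theorem mem_weightings {n l : ℕ} {f : Fin n → Fin l} {k : ℕ} {w : Fin l → ℕ} :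
    w ∈ weightings f k ↔
      (∀ i, 1 ≤ w i ∧ w i < (univ.filter fun x => f x = i).card) ∧ ∑ i, w i = k := by
  simp [weightings, Fintype.mem_piFinset]

/-- The decorated ordered set partition with a given encoding. -/
def DOSPCode.toDOSP {N k : ℕ} (c : DOSPCode N k) : DOSP (N + 1) k where
  len := c.1 + 1
  len_pos := Nat.succ_pos _
  S i := univ.filter fun x => c.2.1.1 x = i
  wt := c.2.2.1
  blocks_nonempty i := by
    have := (mem_weightings.mp c.2.2.2).1 i
    exact card_pos.mp (by omega)
  blocks_disjoint i j hij := by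
    rw [disjoint_filter]
    exact fun x _ hi hj => hij (hi.symm.trans hj)
  blocks_cover x := ⟨c.2.1.1 x, by simp⟩
  wt_lower i := ((mem_weightings.mp c.2.2.2).1 i).1
  wt_upper i := Nat.le_sub_one_of_lt ((mem_weightings.mp c.2.2.2).1 i).2
  wt_sum := (mem_weightings.mp c.2.2.2).2

theorem DOSPCode.toDOSP_injective (N k : ℕ) :
    Function.Injective (DOSPCode.toDOSP : DOSPCode N k → DOSP (N + 1) k) := by
  rintro ⟨⟨l, hl⟩, ⟨f, hf⟩, ⟨w, hw⟩⟩ ⟨⟨l', hl'⟩, ⟨f', hf'⟩, ⟨w', hw'⟩⟩ h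
  simp only [DOSPCode.toDOSP, DOSP.mk.injEq] at h
  obtain ⟨hlen, hS, hwt⟩ := h
  obtain rfl : l = l' := by omega
  obtain rfl : f = f' := by
    funext x
    have hx := congrFun (eq_of_heq hS) (f x)
    have : x ∈ univ.filter fun y => f' y = f x := by
      rw [← hx]
      simp
    exact (mem_filter.mp this).2.symm
  obtain rfl : w = w' := eq_of_heq hwt
  rfl

theorem DOSPCode.exists_toDOSP_eq {N k : ℕ} (D : DOSP (N + 1) k)
    (hD : (0 : Fin (N + 1)) ∈ D.S ⟨0, D.len_pos⟩) : ∃ c : DOSPCode N k, c.toDOSP = D := by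
  obtain ⟨len, len_pos, S, wt, hne, hdisj, hcover, hlower, hupper, hsum⟩ := D
  obtain ⟨l, rfl⟩ : ∃ l, len = l + 1 := ⟨len - 1, by omega⟩
  have hcover' := hcover
  choose f hf using hcover'
  have hfS : ∀ x i, f x = i ↔ x ∈ S i := by
    refine fun x i => ⟨fun h => h ▸ hf x, fun h => ?_⟩
    by_contra hne
    exact disjoint_left.mp (hdisj _ _ hne) (hf x) h
  have hS : (fun i => univ.filter fun x => f x = i) = S := by
    funext i
    ext x
    simp [hfS]
  have hl : l + 1 ≤ N + 1 := by
    have hsurj : Function.Surjective f := fun i => (hne i).imp fun x hx => (hfS x i).mpr hx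
    simpa using Fintype.card_le_of_surjective f hsurj
  subst hS
  refine ⟨⟨⟨l, hl⟩, ⟨f, (hfS _ _).mpr hD⟩, ⟨wt, mem_weightings.mpr ⟨fun i => ⟨hlower i, ?_⟩, hsum⟩⟩⟩,
    rfl⟩
  exact Nat.lt_of_le_sub_one (card_pos.mpr (hne i)) (hupper i)

theorem DOSPCode.zero_mem_toDOSP {N k : ℕ} (c : DOSPCode N k) :
    (0 : Fin (N + 1)) ∈ c.toDOSP.S ⟨0, c.toDOSP.len_pos⟩ := by
  simp only [DOSPCode.toDOSP, mem_filter, mem_univ, true_and]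
  exact c.2.1.2

theorem card_DOSP_eq_sum (N k : ℕ) :
    Nat.card {D : DOSP (N + 1) k // (0 : Fin (N + 1)) ∈ D.S ⟨0, D.len_pos⟩} =
      ∑ l ∈ range (N + 1), ∑ f : Fin (N + 1) → Fin (l + 1),
        if f 0 = 0 then (weightings f k).card else 0 := by
  have hbij : Function.Bijective fun c : DOSPCode N k =>
      (⟨c.toDOSP, c.zero_mem_toDOSP⟩ :
        {D : DOSP (N + 1) k // (0 : Fin (N + 1)) ∈ D.S ⟨0, D.len_pos⟩}) := by
    refine ⟨fun c c' h => DOSPCode.toDOSP_injective N k (Subtype.ext_iff.mp h), fun D => ?_⟩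
    obtain ⟨c, hc⟩ := DOSPCode.exists_toDOSP_eq D.1 D.2
    exact ⟨c, Subtype.ext hc⟩
  rw [← Nat.card_eq_of_bijective _ hbij, Nat.card_eq_fintype_card, Fintype.card_sigma,
    ← Fin.sum_univ_eq_sum_range (fun l => ∑ f : Fin (N + 1) → Fin (l + 1),
      if f 0 = 0 then (weightings f k).card else 0)]
  refine sum_congr rfl fun l _ => ?_
  rw [Fintype.card_sigma, ← sum_filter]
  simp only [Fintype.card_coe]
  exact (sum_subtype _ (by simp) fun f => (weightings f k).card).symm

theorem coeff_prod_blockPoly {n l : ℕ} (f : Fin n → Fin l) (k : ℕ) :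
    (∏ i, blockPoly (univ.filter fun x => f x = i).card).coeff k = (weightings f k).card := by
  simp only [blockPoly]
  rw [prod_univ_sum, Polynomial.finsetSum_coeff, weightings, card_filter]
  push_cast
  refine sum_congr rfl fun w _ => ?_
  rw [prod_pow_eq_pow_sum, Polynomial.coeff_X_pow]
  simp only [eq_comm]

theorem coeff_eulerianPoly (m j : ℕ) :
    (eulerianPoly m).coeff j =
      (Nat.card {σ : Equiv.Perm (Fin m) // descentCount σ = j} : ℚ) := by
  rw [eulerianPoly, Polynomial.finsetSum_coeff, Nat.card_eq_fintype_card, Fintype.card_subtype,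
    card_filter]
  push_cast
  simp only [Polynomial.coeff_X_pow, eq_comm]

/-- the number of decorated ordered set partitions of type `Δ_{k,n}`
whose first block contains the element `1` equals the Eulerian number
`A_{k−1,n−1}`, the number of permutations of `{1,…,n−1}` with exactly `k−1`
descents (indices `i` with `σ(i) > σ(i+1)`). -/
theorem stmt9 {n k : ℕ} (hn : 2 ≤ n) (hk1 : 1 ≤ k) (hk2 : k ≤ n - 1) :
    Nat.card {D : DOSP n k // (⟨0, by omega⟩ : Fin n) ∈ D.S ⟨0, D.len_pos⟩} =
      Nat.card {σ : Equiv.Perm (Fin (n - 1)) //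
        (univ.filter fun i : Fin (n - 1) =>
          ∃ j : Fin (n - 1), (j : ℕ) = (i : ℕ) + 1 ∧ σ j < σ i).card = k - 1} := by
  obtain ⟨N, rfl⟩ : ∃ N, n = N + 1 := ⟨n - 1, by omega⟩
  obtain ⟨j, rfl⟩ : ∃ j, k = j + 1 := ⟨k - 1, by omega⟩
  have hcoeff := congrArg (fun p : Polynomial ℚ => p.coeff (j + 1))
    (X_mul_eulerianPoly_eq_sum (N := N) (by omega))
  simp only [Polynomial.coeff_X_mul, Polynomial.finsetSum_coeff, coeff_eulerianPoly,
    apply_ite (fun p : Polynomial ℚ => p.coeff (j + 1)), coeff_prod_blockPoly,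
    Polynomial.coeff_zero] at hcoeff
  refine (card_DOSP_eq_sum N (j + 1)).trans (Eq.symm ?_)
  exact_mod_cast hcoeff
end

section
/- Let 2 ≤ k and n ≥ k+2, let c assign a real number c_J to every k-element subset J of {1,…,n}, and let L = {ℓ_1 < ⋯ < ℓ_{k−2}} be any (k−2)-element subset of {1,…,n}. Then in 𝔅^{(L)}: (∂_{ℓ_1} ∘ ⋯ ∘ ∂_{ℓ_{k−2}})(Σ_J c_J 𝓛_J) = Σ_{\{i,j\}} ω^{(L)}_{ij} β^{(L)}_{ij}, where the sum on the right is over all 2-element subsets {i,j} of S = {1,…,n}∖L whose two elements are not cyclically adjacent in S, and ω^{(L)}_{ij} = −(c_{L∪{i,j}} − c_{L∪{i,j⁺}} − c_{L∪{i⁺,j}} + c_{L∪{i⁺,j⁺}}) with i⁺, j⁺ the cyclic successors of i, j in S. -/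
open Finset

/-- Cyclic successor in `Fin n`. -/
def csucc {n : ℕ} (x : Fin n) : Fin n :=
  ⟨(x.val + 1) % n, Nat.mod_lt _ (Nat.lt_of_le_of_lt (Nat.zero_le _) x.isLt)⟩

/-- Cyclic predecessor in `Fin n`. -/
def cpred {n : ℕ} (x : Fin n) : Fin n :=
  ⟨(x.val + (n - 1)) % n, Nat.mod_lt _ (Nat.lt_of_le_of_lt (Nat.zero_le _) x.isLt)⟩

/-- The cyclic interval `[i, j]` in `Fin n`. -/
def cInterval {n : ℕ} (i j : Fin n) : Finset (Fin n) :=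
  univ.filter fun x => (x - i).val ≤ (j - i).val

/-- `K` is frozen in `S` if its elements are consecutive in the cyclic order induced
on `S` from `(1,2,…,n)`, i.e. `K` is the intersection of `S` with a cyclic interval. -/
def FrozenIn {n : ℕ} (S K : Finset (Fin n)) : Prop :=
  ∃ i j : Fin n, K = S ∩ cInterval i j

instance {n : ℕ} (S K : Finset (Fin n)) : Decidable (FrozenIn S K) :=
  inferInstanceAs (Decidable (∃ i j : Fin n, K = S ∩ cInterval i j))

/-- The first element of `K` met when reading `j, j+1, j+2, …` cyclically
(`j` itself if `j ∈ K`); junk value `j` if `K = ∅`. -/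
def nextIn {n : ℕ} (K : Finset (Fin n)) (j : Fin n) : Fin n :=
  if h : (univ.filter fun r : Fin n => j + r ∈ K).Nonempty then
    j + (univ.filter fun r : Fin n => j + r ∈ K).min' h
  else j

/-- The cyclic predecessor of `x` in `S`: the first element of `S` met when reading
`x−1, x−2, …` cyclically; junk value `x` if `S = ∅`. -/
def prevIn {n : ℕ} (S : Finset (Fin n)) (x : Fin n) : Fin n :=
  if h : (univ.filter fun r : Fin n => cpred x - r ∈ S).Nonempty then
    cpred x - (univ.filter fun r : Fin n => cpred x - r ∈ S).min' h
  else x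

/-- `∂_j(K) = K ∖ {ℓ}`, where `ℓ = j` if `j ∈ K` and otherwise `ℓ` is the first
element of `K` met when reading `j+1, j+2, …` cyclically. -/
def bdSet {n : ℕ} (j : Fin n) (K : Finset (Fin n)) : Finset (Fin n) :=
  K.erase (nextIn K j)

/-- The basis vector `β^{(L)}_K` of the space `𝔅^{(L)}` of formal linear
combinations (modelled inside `ℝ^{Finset (Fin n)}`): the indicator of `K` if `K`
is nonfrozen in `S = {1,…,n} ∖ L`, and `0` if `K` is frozen. -/
noncomputable def betaV {n : ℕ} (L K : Finset (Fin n)) : Finset (Fin n) → ℝ :=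
  if FrozenIn ((univ : Finset (Fin n)) \ L) K then 0 else Pi.single K 1

/-- The `S`-initial points of `K`: elements of `K` whose cyclic predecessor in `S`
does not lie in `K`. -/
def initPts {n : ℕ} (S K : Finset (Fin n)) : Finset (Fin n) :=
  K.filter fun i => prevIn S i ∉ K

/-- `𝓛^{(L)}_K = Σ_{M ∈ {0,1}^t} (−1)^{1+|M|} β^{(L)}_{K_M}`, where `K_M` replaces the
chosen `S`-initial points of `K` by their cyclic predecessors in `S = {1,…,n} ∖ L`. -/
noncomputable def LElt {n : ℕ} (L K : Finset (Fin n)) : Finset (Fin n) → ℝ :=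
  ∑ T ∈ (initPts ((univ : Finset (Fin n)) \ L) K).powerset,
    ((-1 : ℝ) ^ (1 + T.card)) •
      betaV L ((K \ T) ∪ T.image (prevIn ((univ : Finset (Fin n)) \ L)))

/-- The boundary map `∂_j : 𝔅^{(L)} → 𝔅^{(L∪{j})}`, the linear extension of
`β^{(L)}_K ↦ β^{(L∪{j})}_{∂_j(K)}`. -/
noncomputable def bdMap {n : ℕ} (L : Finset (Fin n)) (j : Fin n)
    (x : Finset (Fin n) → ℝ) : Finset (Fin n) → ℝ :=
  ∑ K : Finset (Fin n), x K • betaV (insert j L) (bdSet j K)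

/-- Iterated boundary maps: `bdComp L [j₁, …, jd] x` applies `∂_{j₁}` first (starting
from `𝔅^{(L)}`), then `∂_{j₂}`, etc. -/
noncomputable def bdComp {n : ℕ} :
    Finset (Fin n) → List (Fin n) → (Finset (Fin n) → ℝ) → (Finset (Fin n) → ℝ)
  | _, [], x => x
  | L0, j :: js, x => bdComp (insert j L0) js (bdMap L0 j x)

/-- The cyclic successor of `x` in `S`. -/
def succIn {n : ℕ} (S : Finset (Fin n)) (x : Fin n) : Fin n := nextIn S (csucc x)

section CyclicOrder

variable {n : ℕ}

/-- The number of steps strictly between `a` and `b` when reading cyclically from `a` to `b`. -/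
def cycGap (a b : Fin n) : ℕ :=
  if a.val < b.val then b.val - a.val - 1 else b.val + n - 1 - a.val

/-- The number of steps when reading cyclically from `a` to `b`. -/
def cycDist (a b : Fin n) : ℕ :=
  if a.val ≤ b.val then b.val - a.val else b.val + n - a.val

lemma val_sub_eq_cycDist (a b : Fin n) : (b - a).val = cycDist a b := by
  have ha := a.isLt
  have hb := b.isLt
  rw [Fin.sub_def, cycDist]
  split_ifs with h
  · rw [show n - a.val + b.val = (b.val - a.val) + n by omega]
    simp only [Nat.add_mod_right]
    exact Nat.mod_eq_of_lt (by omega)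
  · simp only
    rw [Nat.mod_eq_of_lt (by omega)]
    omega

lemma val_csucc (a : Fin n) : (csucc a).val = if a.val + 1 < n then a.val + 1 else 0 := by
  have ha := a.isLt
  simp only [csucc]
  split_ifs with h
  · exact Nat.mod_eq_of_lt h
  · rw [show a.val + 1 = n by omega, Nat.mod_self]

lemma val_cpred (a : Fin n) : (cpred a).val = if 0 < a.val then a.val - 1 else n - 1 := by
  have ha := a.isLt
  simp only [cpred]
  split_ifs with h
  · rw [show a.val + (n - 1) = (a.val - 1) + n by omega, Nat.add_mod_right]
    exact Nat.mod_eq_of_lt (by omega)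
  · exact (Nat.mod_eq_of_lt (by omega)).trans (by omega)

lemma val_sub_csucc (a b : Fin n) : (b - csucc a).val = cycGap a b := by
  have ha := a.isLt
  have hb := b.isLt
  rw [val_sub_eq_cycDist, cycDist, cycGap, val_csucc]
  split_ifs <;> omega

lemma val_cpred_sub (a b : Fin n) : (cpred b - a).val = cycGap a b := by
  have ha := a.isLt
  have hb := b.isLt
  rw [val_sub_eq_cycDist, cycDist, cycGap, val_cpred]
  split_ifs <;> omega

lemma nextIn_eq {K : Finset (Fin n)} {j x : Fin n} (hx : x ∈ K)
    (hmin : ∀ y ∈ K, cycDist j x ≤ cycDist j y) : nextIn K j = x := by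
  have : NeZero n := ⟨by have := j.isLt; omega⟩
  have hmem : x - j ∈ univ.filter fun r : Fin n => j + r ∈ K := by simpa using hx
  rw [nextIn, dif_pos ⟨_, hmem⟩]
  have hmin' : (univ.filter fun r : Fin n => j + r ∈ K).min' ⟨_, hmem⟩ = x - j := by
    refine le_antisymm (min'_le _ _ hmem) (le_min' _ _ _ fun r hr => ?_)
    have h := hmin (j + r) (mem_filter.1 hr).2
    rw [← val_sub_eq_cycDist, ← val_sub_eq_cycDist, add_sub_cancel_left] at h
    exact h
  rw [hmin', add_sub_cancel]

lemma exists_nextIn {K : Finset (Fin n)} (hK : K.Nonempty) (j : Fin n) :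
    ∃ x ∈ K, nextIn K j = x ∧ ∀ y ∈ K, cycDist j x ≤ cycDist j y := by
  obtain ⟨x, hx, h⟩ := exists_min_image K (cycDist j) hK
  exact ⟨x, hx, nextIn_eq hx h, h⟩

lemma nextIn_of_mem {K : Finset (Fin n)} {j : Fin n} (hj : j ∈ K) : nextIn K j = j :=
  nextIn_eq hj fun y _ => by simp [cycDist]

lemma prevIn_eq {S : Finset (Fin n)} {x y : Fin n} (hy : y ∈ S)
    (hmin : ∀ z ∈ S, cycGap y x ≤ cycGap z x) : prevIn S x = y := by
  have : NeZero n := ⟨by have := x.isLt; omega⟩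
  have hmem : cpred x - y ∈ univ.filter fun r : Fin n => cpred x - r ∈ S := by simpa using hy
  rw [prevIn, dif_pos ⟨_, hmem⟩]
  have hmin' : (univ.filter fun r : Fin n => cpred x - r ∈ S).min' ⟨_, hmem⟩ = cpred x - y := by
    refine le_antisymm (min'_le _ _ hmem) (le_min' _ _ _ fun r hr => ?_)
    have h := hmin (cpred x - r) (mem_filter.1 hr).2
    rw [← val_cpred_sub, ← val_cpred_sub, sub_sub_cancel] at h
    exact h
  rw [hmin', sub_sub_cancel]

lemma prevIn_spec {S : Finset (Fin n)} (hS : S.Nonempty) (x : Fin n) :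
    prevIn S x ∈ S ∧ ∀ z ∈ S, cycGap (prevIn S x) x ≤ cycGap z x := by
  obtain ⟨y, hy, h⟩ := exists_min_image S (fun z => cycGap z x) hS
  rw [prevIn_eq hy h]
  exact ⟨hy, h⟩

lemma prevIn_mem {S : Finset (Fin n)} {x : Fin n} (hx : x ∈ S) (y : Fin n) : prevIn S y ∈ S :=
  (prevIn_spec ⟨x, hx⟩ y).1

lemma cycGap_prevIn_le {S : Finset (Fin n)} {z : Fin n} (hz : z ∈ S) (x : Fin n) :
    cycGap (prevIn S x) x ≤ cycGap z x :=
  (prevIn_spec ⟨z, hz⟩ x).2 z hz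

lemma prevIn_ne {S : Finset (Fin n)} {x y : Fin n} (hy : y ∈ S) (hxy : y ≠ x) :
    prevIn S x ≠ x := by
  intro h
  have h1 := cycGap_prevIn_le hy x
  rw [h] at h1
  have h2 := Fin.val_ne_iff.2 hxy
  have hx := x.isLt
  have hy := y.isLt
  simp only [cycGap] at h1
  split_ifs at h1 <;> omega

lemma succIn_eq {S : Finset (Fin n)} {x y : Fin n} (hy : y ∈ S)
    (hmin : ∀ z ∈ S, cycGap x y ≤ cycGap x z) : succIn S x = y := by
  refine nextIn_eq hy fun z hz => ?_
  rw [← val_sub_eq_cycDist, ← val_sub_eq_cycDist, val_sub_csucc, val_sub_csucc]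
  exact hmin z hz

lemma succIn_spec {S : Finset (Fin n)} (hS : S.Nonempty) (x : Fin n) :
    succIn S x ∈ S ∧ ∀ z ∈ S, cycGap x (succIn S x) ≤ cycGap x z := by
  obtain ⟨y, hy, h⟩ := exists_min_image S (fun z => cycGap x z) hS
  rw [succIn_eq hy h]
  exact ⟨hy, h⟩

lemma succIn_prevIn {S : Finset (Fin n)} {x : Fin n} (hx : x ∈ S) :
    succIn S (prevIn S x) = x := by
  refine succIn_eq hx fun z hz => ?_
  have h := cycGap_prevIn_le hz x
  have h1 := x.isLt
  have h2 := z.isLt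
  have h3 := (prevIn S x).isLt
  simp only [cycGap] at h ⊢
  split_ifs at h ⊢ <;> omega

lemma prevIn_succIn {S : Finset (Fin n)} {x : Fin n} (hx : x ∈ S) :
    prevIn S (succIn S x) = x := by
  refine prevIn_eq hx fun z hz => ?_
  have h := (succIn_spec ⟨x, hx⟩ x).2 z hz
  have h1 := x.isLt
  have h2 := z.isLt
  have h3 := (succIn S x).isLt
  simp only [cycGap] at h ⊢
  split_ifs at h ⊢ <;> omega

lemma prevIn_injOn (S : Finset (Fin n)) : Set.InjOn (prevIn S) S := fun x hx y hy h => by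
  rw [← succIn_prevIn (mem_coe.1 hx), h, succIn_prevIn (mem_coe.1 hy)]

/-- Deleting `j` from `S` does not change predecessors other than `j`. -/
lemma prevIn_erase_of_ne {S : Finset (Fin n)} {j x : Fin n} (hx : x ∈ S)
    (h : prevIn S x ≠ j) : prevIn (S.erase j) x = prevIn S x :=
  prevIn_eq (mem_erase.2 ⟨h, prevIn_mem hx x⟩) fun _ hz =>
    cycGap_prevIn_le (mem_of_mem_erase hz) x

/-- Deleting `j` from `S` makes the predecessor of `j` the predecessor of the successor of `j`. -/
lemma prevIn_erase_of_eq {S : Finset (Fin n)} {j x : Fin n} (hx : x ∈ S) (hxj : x ≠ j)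
    (h : prevIn S x = j) : prevIn (S.erase j) x = prevIn S j := by
  have hj : j ∈ S := h ▸ prevIn_mem hx x
  refine prevIn_eq (mem_erase.2 ⟨prevIn_ne hx hxj, prevIn_mem hx j⟩) fun z hz => ?_
  have hz' := mem_of_mem_erase hz
  have h1 := cycGap_prevIn_le hz' x
  have h2 := cycGap_prevIn_le hz' j
  have h3 := cycGap_prevIn_le hx j
  have h4 := Fin.val_ne_iff.2 (ne_of_mem_erase hz)
  have h5 := Fin.val_ne_iff.2 hxj
  have h6 := Fin.val_ne_iff.2 (prevIn_ne hx hxj)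
  rw [h] at h1
  have l1 := x.isLt
  have l2 := z.isLt
  have l3 := j.isLt
  have l4 := (prevIn S j).isLt
  simp only [cycGap] at h1 h2 h3 ⊢
  split_ifs at h1 h2 h3 ⊢ <;> omega

end CyclicOrder

section Boundary

variable {n : ℕ}

/-- The set obtained from `J` by replacing each element of `T` by its predecessor in `S`. -/
def shiftSet (S J T : Finset (Fin n)) : Finset (Fin n) :=
  (J \ T) ∪ T.image (prevIn S)

lemma mem_shiftSet {S J T : Finset (Fin n)} {x : Fin n} :
    x ∈ shiftSet S J T ↔ (x ∈ J ∧ x ∉ T) ∨ ∃ t ∈ T, prevIn S t = x := by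
  simp [shiftSet]

lemma mem_initPts {S J : Finset (Fin n)} {x : Fin n} :
    x ∈ initPts S J ↔ x ∈ J ∧ prevIn S x ∉ J := by
  simp [initPts]

lemma cycDist_le_cycDist_prevIn {S : Finset (Fin n)} {j l t : Fin n} (hl : l ∈ S) (htl : t ≠ l)
    (hlj : l ≠ j) (h : t = j ∨ cycDist j l ≤ cycDist j t) :
    cycDist j l ≤ cycDist j (prevIn S t) := by
  have h1 := cycGap_prevIn_le hl t
  have h2 := Fin.val_ne_iff.2 htl
  have h3 := Fin.val_ne_iff.2 hlj
  have l1 := j.isLt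
  have l2 := l.isLt
  have l3 := t.isLt
  have l4 := (prevIn S t).isLt
  rcases h with h | h
  · subst h
    simp only [cycGap, cycDist] at h1 ⊢
    split_ifs at h1 ⊢ <;> omega
  · simp only [cycGap, cycDist] at h1 h ⊢
    split_ifs at h1 h ⊢ <;> omega

lemma cycDist_prevIn_lt {S : Finset (Fin n)} {j l : Fin n} (hj : j ∈ S) (hlj : l ≠ j) :
    cycDist j (prevIn S l) < cycDist j l := by
  have h1 := cycGap_prevIn_le hj l
  have h3 := Fin.val_ne_iff.2 hlj
  have l1 := j.isLt
  have l2 := l.isLt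
  have l4 := (prevIn S l).isLt
  simp only [cycGap, cycDist] at h1 ⊢
  split_ifs at h1 ⊢ <;> omega

/-- Reading from `j`, the first element of a shifted set is the first element `l` of the original
set, if `l` is not shifted. -/
lemma nextIn_shiftSet {S J T : Finset (Fin n)} {j l : Fin n} (hJ : J ⊆ S) (hl : l ∈ J)
    (hlj : l ≠ j) (hmin : ∀ y ∈ J, y ≠ j → cycDist j l ≤ cycDist j y) (hT : T ⊆ J) (hlT : l ∉ T)
    (hjT : j ∈ J → j ∈ T) : nextIn (shiftSet S J T) j = l := by
  refine nextIn_eq (mem_shiftSet.2 (Or.inl ⟨hl, hlT⟩)) fun y hy => ?_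
  rcases mem_shiftSet.1 hy with ⟨h1, h2⟩ | ⟨t, ht, rfl⟩
  · exact hmin y h1 fun h => h2 (h ▸ hjT (h ▸ h1))
  · exact cycDist_le_cycDist_prevIn (hJ hl) (fun h => hlT (h ▸ ht)) hlj
      (or_iff_not_imp_left.2 (hmin t (hT ht)))

/-- Reading from `j`, the first element of a shifted set is the shift of the first element `l` of
the original set, if `l` is shifted. -/
lemma nextIn_shiftSet_insert {S J T : Finset (Fin n)} {j l : Fin n} (hJ : J ⊆ S) (hj : j ∈ S)
    (hl : l ∈ J) (hlj : l ≠ j) (hmin : ∀ y ∈ J, y ≠ j → cycDist j l ≤ cycDist j y)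
    (hT : T ⊆ J) (hlT : l ∉ T) (hjT : j ∈ J → j ∈ T) :
    nextIn (shiftSet S J (insert l T)) j = prevIn S l := by
  have hlt := cycDist_prevIn_lt hj hlj
  refine nextIn_eq (mem_shiftSet.2 (Or.inr ⟨l, mem_insert_self _ _, rfl⟩)) fun y hy => ?_
  rcases mem_shiftSet.1 hy with ⟨h1, h2⟩ | ⟨t, ht, rfl⟩
  · exact hlt.le.trans (hmin y h1 fun h => h2 (mem_insert_of_mem (h ▸ hjT (h ▸ h1))))
  · rcases mem_insert.1 ht with rfl | ht
    · exact le_rfl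
    · exact hlt.le.trans (cycDist_le_cycDist_prevIn (hJ hl) (fun h => hlT (h ▸ ht)) hlj
        (or_iff_not_imp_left.2 (hmin t (hT ht))))

/-- The boundary of a shifted set does not see whether the first element after `j` is shifted. -/
lemma bdSet_shiftSet_insert {S J T : Finset (Fin n)} {j l : Fin n} (hJ : J ⊆ S) (hj : j ∈ S)
    (hl : l ∈ initPts S J) (hlj : l ≠ j)
    (hmin : ∀ y ∈ J, y ≠ j → cycDist j l ≤ cycDist j y)
    (hT : T ⊆ initPts S J) (hlT : l ∉ T) (hjT : j ∈ J → j ∈ T) :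
    bdSet j (shiftSet S J (insert l T)) = bdSet j (shiftSet S J T) := by
  have hl' := mem_initPts.1 hl
  have hTJ : T ⊆ J := hT.trans (filter_subset _ _)
  rw [bdSet, bdSet, nextIn_shiftSet hJ hl'.1 hlj hmin hTJ hlT hjT,
    nextIn_shiftSet_insert hJ hj hl'.1 hlj hmin hTJ hlT hjT]
  ext x
  simp only [mem_erase, mem_shiftSet, mem_insert, not_or]
  constructor
  · rintro ⟨h1, ⟨h2, h3, h4⟩ | ⟨t, rfl | ht, rfl⟩⟩
    · exact ⟨h3, Or.inl ⟨h2, h4⟩⟩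
    · exact absurd rfl h1
    · exact ⟨fun h => (mem_initPts.1 (hT ht)).2 (h ▸ hl'.1), Or.inr ⟨t, ht, rfl⟩⟩
  · rintro ⟨h1, ⟨h2, h3⟩ | ⟨t, ht, rfl⟩⟩
    · exact ⟨fun h => hl'.2 (h ▸ h2), Or.inl ⟨h2, h1, h3⟩⟩
    · exact ⟨fun h => hlT (prevIn_injOn S (hJ (hTJ ht)) (hJ hl'.1) h ▸ ht),
        Or.inr ⟨t, Or.inr ht, rfl⟩⟩

/-- If `j` is an unshifted element of `J`, then taking the boundary at `j` commutes with shifts. -/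
lemma bdSet_shiftSet_of_mem {S J T : Finset (Fin n)} {j : Fin n} (hJ : J ⊆ S) (hj : j ∈ J)
    (hT : T ⊆ initPts S J) (hjT : j ∉ T) :
    bdSet j (shiftSet S J T) = shiftSet (S.erase j) (J.erase j) T := by
  rw [bdSet, nextIn_of_mem (mem_shiftSet.2 (Or.inl ⟨hj, hjT⟩))]
  have hp : ∀ t ∈ T, prevIn S t ≠ j := fun t ht h => (mem_initPts.1 (hT ht)).2 (h ▸ hj)
  have hp' : ∀ t ∈ T, prevIn (S.erase j) t = prevIn S t := fun t ht =>
    prevIn_erase_of_ne (hJ (mem_initPts.1 (hT ht)).1) (hp t ht)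
  ext x
  simp only [mem_erase, mem_shiftSet]
  constructor
  · rintro ⟨h1, ⟨h2, h3⟩ | ⟨t, ht, rfl⟩⟩
    · exact Or.inl ⟨⟨h1, h2⟩, h3⟩
    · exact Or.inr ⟨t, ht, hp' t ht⟩
  · rintro (⟨⟨h1, h2⟩, h3⟩ | ⟨t, ht, rfl⟩)
    · exact ⟨h1, Or.inl ⟨h2, h3⟩⟩
    · rw [hp' t ht]
      exact ⟨hp t ht, Or.inr ⟨t, ht, rfl⟩⟩

/-- If `j` is a shifted element of `J` and its successor `l` lies in `J`, then the boundary at `j`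
is obtained by shifting `l` instead of `j`. -/
lemma bdSet_shiftSet_insert_of_prevIn_eq {S J T : Finset (Fin n)} {j l : Fin n} (hJ : J ⊆ S)
    (hj : j ∈ J) (hl : l ∈ J) (hlj : l ≠ j)
    (hmin : ∀ y ∈ J, y ≠ j → cycDist j l ≤ cycDist j y) (hpl : prevIn S l = j)
    (hpj : prevIn S j ∉ J) (hT : T ⊆ initPts S J) (hjT : j ∉ T) :
    bdSet j (shiftSet S J (insert j T)) =
      shiftSet (S.erase j) (J.erase j) (insert l T) := by
  have hTJ : T ⊆ J := hT.trans (filter_subset _ _)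
  have hlT : l ∉ T := fun h => (mem_initPts.1 (hT h)).2 (hpl ▸ hj)
  have hp' : ∀ t ∈ T, prevIn (S.erase j) t = prevIn S t := fun t ht =>
    prevIn_erase_of_ne (hJ (hTJ ht)) fun h => (mem_initPts.1 (hT ht)).2 (h ▸ hj)
  have hpl' : prevIn (S.erase j) l = prevIn S j := prevIn_erase_of_eq (hJ hl) hlj hpl
  rw [bdSet, nextIn_shiftSet hJ hl hlj hmin (insert_subset hj hTJ)
    (by simp [hlj, hlT]) fun _ => mem_insert_self _ _]
  ext x
  simp only [mem_erase, mem_shiftSet, mem_insert, not_or]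
  constructor
  · rintro ⟨h1, ⟨h2, h3, h4⟩ | ⟨t, rfl | ht, rfl⟩⟩
    · exact Or.inl ⟨⟨h3, h2⟩, h1, h4⟩
    · exact Or.inr ⟨l, Or.inl rfl, hpl'⟩
    · exact Or.inr ⟨t, Or.inr ht, hp' t ht⟩
  · rintro (⟨⟨h1, h2⟩, h3, h4⟩ | ⟨t, rfl | ht, rfl⟩)
    · exact ⟨h3, Or.inl ⟨h2, h1, h4⟩⟩
    · rw [hpl']
      exact ⟨fun h => hpj (h ▸ hl), Or.inr ⟨j, Or.inl rfl, rfl⟩⟩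
    · rw [hp' t ht]
      exact ⟨fun h => (mem_initPts.1 (hT ht)).2 (h ▸ hl), Or.inr ⟨t, Or.inr ht, rfl⟩⟩

lemma frozenIn_empty {S : Finset (Fin n)} {j : Fin n} (hj : j ∉ S) : FrozenIn S ∅ := by
  refine ⟨j, j, (eq_empty_of_forall_notMem fun x hx => ?_).symm⟩
  have h := (mem_filter.1 (mem_inter.1 hx).2).2
  have hxj : x ≠ j := fun h => hj (h ▸ (mem_inter.1 hx).1)
  rw [val_sub_eq_cycDist, val_sub_eq_cycDist] at h
  have := Fin.val_ne_iff.2 hxj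
  have l1 := x.isLt
  have l2 := j.isLt
  simp only [cycDist] at h
  split_ifs at h <;> omega

lemma mem_cInterval {i j x : Fin n} : x ∈ cInterval i j ↔ cycDist i x ≤ cycDist i j := by
  simp [cInterval, val_sub_eq_cycDist]

lemma cycDist_lt (a x : Fin n) : cycDist a x < n := by
  have h1 := a.isLt
  have h2 := x.isLt
  rw [cycDist]
  split_ifs <;> omega

lemma cycDist_injective (a : Fin n) : Function.Injective (cycDist a) := fun x y h => by
  have h1 := a.isLt
  have h2 := x.isLt
  have h3 := y.isLt
  simp only [cycDist] at h
  apply Fin.ext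
  split_ifs at h <;> omega

/-- Distances from `j` in terms of distances from a base point `a`. -/
lemma cycDist_eq_of_base (a j x : Fin n) :
    cycDist j x = if cycDist a j ≤ cycDist a x then cycDist a x - cycDist a j
      else cycDist a x + n - cycDist a j := by
  have h1 := a.isLt
  have h2 := x.isLt
  have h3 := j.isLt
  simp only [cycDist]
  split_ifs <;> omega

lemma cycDist_csucc {a l : Fin n} (h : cycDist a l + 1 < n) :
    cycDist a (csucc l) = cycDist a l + 1 := by
  have h1 := a.isLt
  have h2 := l.isLt
  simp only [cycDist, val_csucc] at h ⊢
  split_ifs at h ⊢ <;> omega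

/-- The boundary map on sets takes frozen sets to frozen sets. -/
lemma FrozenIn.bdSet {S K : Finset (Fin n)} {j : Fin n} (hj : j ∈ S) (hK : FrozenIn S K) :
    FrozenIn (S.erase j) (bdSet j K) := by
  obtain ⟨a, b, hab⟩ := hK
  rcases K.eq_empty_or_nonempty with rfl | hne
  · exact frozenIn_empty (notMem_erase j S)
  by_cases hjK : j ∈ K
  · refine ⟨a, b, ?_⟩
    rw [_root_.bdSet, nextIn_of_mem hjK, hab, erase_inter]
  obtain ⟨l, hl, hnext, hmin⟩ := exists_nextIn hne j
  rw [_root_.bdSet, hnext]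
  have hmem : ∀ x, x ∈ K ↔ x ∈ S ∧ cycDist a x ≤ cycDist a b := fun x => by
    rw [hab, mem_inter, mem_cInterval]
  have hjab : ¬ cycDist a j ≤ cycDist a b := fun h => hjK ((hmem j).2 ⟨hj, h⟩)
  have hlab := ((hmem l).1 hl).2
  have hjlt := cycDist_lt a j
  have hmin' : ∀ x ∈ K, cycDist a l ≤ cycDist a x := fun x hx => by
    have h1 := hmin x hx
    have h2 := ((hmem x).1 hx).2
    rw [cycDist_eq_of_base a j l, cycDist_eq_of_base a j x] at h1
    split_ifs at h1 <;> omega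
  by_cases hlb : l = b
  · subst hlb
    convert frozenIn_empty (notMem_erase j S)
    refine eq_empty_of_forall_notMem fun x hx => ?_
    have hxK := mem_of_mem_erase hx
    exact ne_of_mem_erase hx
      (cycDist_injective a (le_antisymm ((hmem x).1 hxK).2 (hmin' x hxK)))
  · have hlb' := (cycDist_injective a).ne hlb
    have hsucc := cycDist_csucc (a := a) (l := l) (by omega)
    refine ⟨csucc l, b, ext fun x => ?_⟩
    have hxlt := cycDist_lt a x
    simp only [mem_erase, mem_inter, mem_cInterval]
    rw [cycDist_eq_of_base a _ x, cycDist_eq_of_base a _ b, hsucc]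
    constructor
    · rintro ⟨hxl, hx⟩
      refine ⟨⟨fun h => hjK (h ▸ hx), ((hmem x).1 hx).1⟩, ?_⟩
      have h1 := hmin' x hx
      have h2 := ((hmem x).1 hx).2
      have h3 := (cycDist_injective a).ne hxl
      split_ifs <;> omega
    · rintro ⟨⟨hxj, hxS⟩, h⟩
      refine ⟨fun hxl => ?_, (hmem x).2 ⟨hxS, ?_⟩⟩
      · subst hxl
        split_ifs at h <;> omega
      · split_ifs at h <;> omega

end Boundary

section BoundaryMap

variable {n : ℕ}

lemma bdMap_sum {ι : Type*} (L : Finset (Fin n)) (j : Fin n) (s : Finset ι) (a : ι → ℝ)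
    (f : ι → Finset (Fin n) → ℝ) :
    bdMap L j (∑ i ∈ s, a i • f i) = ∑ i ∈ s, a i • bdMap L j (f i) := by
  simp only [bdMap, Finset.sum_apply, Pi.smul_apply, sum_smul, smul_sum, smul_assoc]
  exact sum_comm

lemma bdMap_betaV {L K : Finset (Fin n)} {j : Fin n} (hj : j ∉ L) :
    bdMap L j (betaV L K) = betaV (insert j L) (bdSet j K) := by
  by_cases hK : FrozenIn (univ \ L) K
  · have h : FrozenIn (univ \ insert j L) (bdSet j K) := by
      rw [sdiff_insert]
      exact hK.bdSet (by simpa using hj)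
    simp [bdMap, betaV, hK, h]
  · rw [bdMap, betaV, if_neg hK, sum_eq_single K]
    · simp
    · intro b _ hb
      simp [hb]
    · simp

lemma bdMap_LElt {L : Finset (Fin n)} {j : Fin n} (hj : j ∉ L) (J : Finset (Fin n)) :
    bdMap L j (LElt L J) = ∑ T ∈ (initPts (univ \ L) J).powerset,
      ((-1 : ℝ) ^ (1 + T.card)) • betaV (insert j L) (bdSet j (shiftSet (univ \ L) J T)) := by
  rw [LElt, bdMap_sum]
  exact sum_congr rfl fun T _ => congrArg _ (bdMap_betaV hj)

/-- A sum over subsets with alternating signs vanishes when its terms do not depend on whether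
a fixed element is chosen. -/
lemma sum_powerset_insert_eq_zero {V : Type*} [AddCommGroup V] [Module ℝ V] {l : Fin n}
    {s : Finset (Fin n)} (hl : l ∉ s) (f : Finset (Fin n) → V)
    (h : ∀ T ⊆ s, f (insert l T) = f T) (d : ℕ) :
    ∑ T ∈ (insert l s).powerset, ((-1 : ℝ) ^ (d + T.card)) • f T = 0 := by
  rw [sum_powerset_insert hl, ← sum_add_distrib]
  refine sum_eq_zero fun T hT => ?_
  have hT := mem_powerset.1 hT
  rw [h T hT, card_insert_of_notMem fun h => hl (hT h), ← add_assoc, pow_succ]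
  simp

/-- The boundary at `j` of `𝓛_J` vanishes when `j ∉ J`. -/
lemma bdMap_LElt_of_notMem {L J : Finset (Fin n)} {j : Fin n} (hj : j ∉ L)
    (hJ : J ⊆ univ \ L) (hne : J.Nonempty) (hjJ : j ∉ J) : bdMap L j (LElt L J) = 0 := by
  have hjS : j ∈ univ \ L := by simpa using hj
  obtain ⟨l, hl, -, hmin⟩ := exists_nextIn hne j
  have hlj : l ≠ j := fun h => hjJ (h ▸ hl)
  have hpts : l ∈ initPts (univ \ L) J := mem_initPts.2
    ⟨hl, fun h => (hmin _ h).not_gt (cycDist_prevIn_lt hjS hlj)⟩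
  rw [bdMap_LElt hj, ← insert_erase hpts]
  refine sum_powerset_insert_eq_zero (notMem_erase _ _) _ (fun T hT => ?_) 1
  rw [bdSet_shiftSet_insert hJ hjS hpts hlj (fun y hy _ => hmin y hy)
    (hT.trans (erase_subset _ _)) (fun h => notMem_erase _ _ (hT h)) fun h => absurd h hjJ]

lemma mem_initPts_erase {S J : Finset (Fin n)} {j x : Fin n} (hJ : J ⊆ S) (hx : x ∈ J)
    (hxj : x ≠ j) (hp : prevIn S x ≠ j) :
    x ∈ initPts (S.erase j) (J.erase j) ↔ x ∈ initPts S J := by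
  rw [mem_initPts, mem_initPts, prevIn_erase_of_ne (hJ hx) hp]
  simp [hx, hxj, hp]

lemma mem_initPts_erase_of_prevIn_eq {S J : Finset (Fin n)} {j x : Fin n} (hJ : J ⊆ S)
    (hx : x ∈ J) (hxj : x ≠ j) (hp : prevIn S x = j) :
    x ∈ initPts (S.erase j) (J.erase j) ↔ prevIn S j ∉ J := by
  rw [mem_initPts, prevIn_erase_of_eq (hJ hx) hxj hp]
  simp [hx, hxj, prevIn_ne (hJ hx) hxj]

/-- The boundary at `j` of `𝓛_J` is `𝓛_{J ∖ {j}}` when `j ∈ J`. -/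
lemma bdMap_LElt_of_mem {L J : Finset (Fin n)} {j : Fin n} (hj : j ∉ L)
    (hJ : J ⊆ univ \ L) (hjJ : j ∈ J) (hne : (J.erase j).Nonempty) :
    bdMap L j (LElt L J) = LElt (insert j L) (J.erase j) := by
  have hLE : LElt (insert j L) (J.erase j) =
      ∑ T ∈ (initPts ((univ \ L).erase j) (J.erase j)).powerset,
      ((-1 : ℝ) ^ (1 + T.card)) •
        betaV (insert j L) (shiftSet ((univ \ L).erase j) (J.erase j) T) := by
    rw [← sdiff_insert]
    rfl
  rw [bdMap_LElt hj, hLE]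
  clear hLE
  have hjS : j ∈ univ \ L := hJ hjJ
  generalize univ \ L = S at *
  obtain ⟨l, hl, -, hmin⟩ := exists_nextIn hne j
  have hlJ := mem_of_mem_erase hl
  have hlj := ne_of_mem_erase hl
  replace hmin : ∀ y ∈ J, y ≠ j → cycDist j l ≤ cycDist j y := fun y hy hyj =>
    hmin y (mem_erase.2 ⟨hyj, hy⟩)
  have hsub : initPts (S.erase j) (J.erase j) ⊆ J.erase j := filter_subset _ _
  have hpnot : ∀ x ∈ initPts S J, prevIn S x ≠ j := fun x hx h =>
    (mem_initPts.1 hx).2 (h ▸ hjJ)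
  by_cases hpj : prevIn S j ∈ J
  · have hpts : initPts (S.erase j) (J.erase j) = initPts S J := by
      ext x
      by_cases hx : x ∈ J.erase j
      · have hxJ := mem_of_mem_erase hx
        by_cases hp : prevIn S x = j
        · rw [mem_initPts_erase_of_prevIn_eq hJ hxJ (ne_of_mem_erase hx) hp]
          exact iff_of_false (not_not.2 hpj) fun h => hpnot x h hp
        · exact mem_initPts_erase hJ hxJ (ne_of_mem_erase hx) hp
      · refine iff_of_false (fun h => hx (hsub h)) fun h => hx (mem_erase.2 ⟨?_, ?_⟩)
        · rintro rfl
          exact (mem_initPts.1 h).2 hpj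
        · exact (mem_initPts.1 h).1
    rw [hpts]
    refine sum_congr rfl fun T hT => ?_
    have hT := mem_powerset.1 hT
    rw [bdSet_shiftSet_of_mem hJ hjJ hT fun h => (mem_initPts.1 (hT h)).2 hpj]
  have hjpts : j ∈ initPts S J := mem_initPts.2 ⟨hjJ, hpj⟩
  rw [← insert_erase hjpts, sum_powerset_insert (notMem_erase _ _)]
  have hsame : ∀ T ⊆ (initPts S J).erase j,
      bdSet j (shiftSet S J T) = shiftSet (S.erase j) (J.erase j) T := fun T hT =>
    bdSet_shiftSet_of_mem hJ hjJ (hT.trans (erase_subset _ _))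
      fun h => notMem_erase _ _ (hT h)
  have hcard : ∀ T ⊆ (initPts S J).erase j, (insert j T).card = T.card + 1 := fun T hT =>
    card_insert_of_notMem fun h => notMem_erase _ _ (hT h)
  by_cases hpl : prevIn S l = j
  · have hlpts : l ∉ (initPts S J).erase j := fun h => hpnot l (mem_of_mem_erase h) hpl
    have hpts : initPts (S.erase j) (J.erase j) = insert l ((initPts S J).erase j) := by
      ext x
      rw [mem_insert, mem_erase]
      by_cases hx : x ∈ J.erase j
      · have hxJ := mem_of_mem_erase hx
        have hxj := ne_of_mem_erase hx
        by_cases hp : prevIn S x = j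
        · have hxl : x = l := prevIn_injOn S (hJ hxJ) (hJ hlJ) (hp.trans hpl.symm)
          rw [mem_initPts_erase_of_prevIn_eq hJ hxJ hxj hp]
          exact iff_of_true hpj (Or.inl hxl)
        · rw [mem_initPts_erase hJ hxJ hxj hp]
          have hxl : x ≠ l := fun h => hp (h ▸ hpl)
          simp [hxj, hxl]
      · refine iff_of_false (fun h => hx (hsub h)) ?_
        rintro (rfl | ⟨h1, h2⟩)
        · exact hx hl
        · exact hx (mem_erase.2 ⟨h1, (mem_initPts.1 h2).1⟩)
    rw [hpts, sum_powerset_insert hlpts]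
    congr 1
    · exact sum_congr rfl fun T hT => by rw [hsame T (mem_powerset.1 hT)]
    · refine sum_congr rfl fun T hT => ?_
      have hT := mem_powerset.1 hT
      rw [hcard T hT, card_insert_of_notMem fun h => hlpts (hT h),
        bdSet_shiftSet_insert_of_prevIn_eq hJ hjJ hlJ hlj hmin hpl hpj
          (hT.trans (erase_subset _ _)) fun h => notMem_erase _ _ (hT h)]
  · have hlpts : l ∈ (initPts S J).erase j := mem_erase.2 ⟨hlj, mem_initPts.2
      ⟨hlJ, fun h => (hmin _ h hpl).not_gt (cycDist_prevIn_lt hjS hlj)⟩⟩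
    have hnosucc : ∀ x ∈ J, x ≠ j → prevIn S x ≠ j := fun x hx hxj hp => by
      have h1 := cycDist_le_cycDist_prevIn (t := x) (hJ hlJ) (fun h => hpl (h ▸ hp)) hlj
        (Or.inr (hmin x hx hxj))
      rw [hp] at h1
      have h2 : cycDist j j = 0 := by simp [cycDist]
      exact hlj (cycDist_injective j (by omega))
    have hpts : initPts (S.erase j) (J.erase j) = (initPts S J).erase j := by
      ext x
      rw [mem_erase]
      by_cases hx : x ∈ J.erase j
      · have hxJ := mem_of_mem_erase hx
        have hxj := ne_of_mem_erase hx
        rw [mem_initPts_erase hJ hxJ hxj (hnosucc x hxJ hxj)]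
        simp [hxj]
      · exact iff_of_false (fun h => hx (hsub h))
          fun h => hx (mem_erase.2 ⟨h.1, (mem_initPts.1 h.2).1⟩)
    rw [hpts]
    refine (congrArg₂ (· + ·) ?_ ?_).trans (add_zero _)
    · exact sum_congr rfl fun T hT => by rw [hsame T (mem_powerset.1 hT)]
    · have hz := sum_powerset_insert_eq_zero (notMem_erase l ((initPts S J).erase j))
        (fun T => betaV (insert j L) (bdSet j (shiftSet S J (insert j T))))
        (fun T hT => by
          have hT' := hT.trans (erase_subset _ _)
          rw [insert_comm, bdSet_shiftSet_insert hJ hjS (mem_of_mem_erase hlpts) hlj hmin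
            (insert_subset hjpts (hT'.trans (erase_subset _ _)))
            (fun h => (mem_insert.1 h).elim hlj fun h => notMem_erase _ _ (hT h))
            fun _ => mem_insert_self _ _]) 2
      rw [insert_erase hlpts] at hz
      rw [← hz]
      refine sum_congr rfl fun T hT => ?_
      rw [hcard T (mem_powerset.1 hT), show 1 + (T.card + 1) = 2 + T.card by ring]

/-- The boundary map on weighted sums of the elements `𝓛_J`. -/
lemma bdMap_sum_LElt {L : Finset (Fin n)} {j : Fin n} (hj : j ∉ L) {m : ℕ} (hm : 1 ≤ m)
    (c : Finset (Fin n) → ℝ) :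
    bdMap L j (∑ J ∈ powersetCard (m + 1) (univ \ L), c (L ∪ J) • LElt L J) =
      ∑ J ∈ powersetCard m (univ \ insert j L), c (insert j L ∪ J) • LElt (insert j L) J := by
  have hjS : j ∈ univ \ L := by simpa using hj
  have hj' : j ∉ univ \ insert j L := by simp
  have hins : univ \ L = insert j (univ \ insert j L) := by
    rw [sdiff_insert, insert_erase hjS]
  rw [bdMap_sum, hins, powersetCard_succ_insert hj', sum_union, sum_image, sum_eq_zero, zero_add]
  · refine sum_congr rfl fun J hJ => ?_
    obtain ⟨hJS, hcard⟩ := mem_powersetCard.1 hJ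
    have hjJ : j ∉ J := fun h => hj' (hJS h)
    rw [bdMap_LElt_of_mem hj (hins ▸ insert_subset_insert j hJS) (mem_insert_self j J),
      erase_insert hjJ, union_insert, insert_union]
    rw [erase_insert hjJ]
    exact card_pos.1 (by omega)
  · intro J hJ
    obtain ⟨hJS, hcard⟩ := mem_powersetCard.1 hJ
    rw [bdMap_LElt_of_notMem hj (hins ▸ hJS.trans (subset_insert _ _)) (card_pos.1 (by omega))
      fun h => hj' (hJS h), smul_zero]
  · intro A hA B hB hAB
    have hA' : j ∉ A := fun h => hj' ((mem_powersetCard.1 hA).1 h)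
    have hB' : j ∉ B := fun h => hj' ((mem_powersetCard.1 hB).1 h)
    rw [← erase_insert hA', hAB, erase_insert hB']
  · refine disjoint_left.2 fun A hA hA' => ?_
    obtain ⟨B, -, rfl⟩ := mem_image.1 hA'
    exact hj' ((mem_powersetCard.1 hA).1 (mem_insert_self j B))

/-- Iterated boundary maps on weighted sums of the elements `𝓛_J`. -/
lemma bdComp_sum_LElt (c : Finset (Fin n) → ℝ) {m : ℕ} (hm : 1 ≤ m) (l : List (Fin n)) :
    ∀ L : Finset (Fin n), l.Nodup → (∀ x ∈ l, x ∉ L) →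
    bdComp L l (∑ J ∈ powersetCard (m + l.length) (univ \ L), c (L ∪ J) • LElt L J) =
      ∑ J ∈ powersetCard m (univ \ (L ∪ l.toFinset)),
        c (L ∪ l.toFinset ∪ J) • LElt (L ∪ l.toFinset) J := by
  induction l with
  | nil => intro L _ _; simp [bdComp]
  | cons j l ih =>
    intro L hnd hdisj
    have hj : j ∉ L := hdisj j (by simp)
    rw [List.nodup_cons] at hnd
    rw [bdComp, List.length_cons, ← add_assoc, bdMap_sum_LElt hj (by omega),
      ih (insert j L) hnd.2, List.toFinset_cons, union_insert, insert_union]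
    intro x hx hx'
    rcases mem_insert.1 hx' with rfl | h
    · exact hnd.1 hx
    · exact hdisj x (by simp [hx]) h

end BoundaryMap

section PairExpansion

variable {n : ℕ}

lemma betaV_singleton {L : Finset (Fin n)} {a : Fin n} (ha : a ∉ L) : betaV L {a} = 0 := by
  rw [betaV, if_pos]
  refine ⟨a, a, ext fun x => ?_⟩
  have h : cycDist a a = 0 := by simp [cycDist]
  rw [mem_singleton, mem_inter, mem_cInterval, h, Nat.le_zero]
  constructor
  · rintro rfl
    exact ⟨by simpa using ha, h⟩
  · rintro ⟨-, hx⟩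
    exact cycDist_injective a (hx.trans h.symm)

lemma betaV_prevIn {L : Finset (Fin n)} {a : Fin n} (ha : a ∉ L) :
    betaV L {prevIn (univ \ L) a, a} = 0 := by
  have haS : a ∈ univ \ L := by simpa using ha
  by_cases hp : prevIn (univ \ L) a = a
  · rw [hp, pair_eq_singleton, betaV_singleton ha]
  rw [betaV, if_pos]
  refine ⟨prevIn (univ \ L) a, a, ext fun x => ?_⟩
  rw [mem_insert, mem_singleton, mem_inter, mem_cInterval]
  have hp' := Fin.val_ne_iff.2 hp
  have l1 := a.isLt
  have l2 := x.isLt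
  have l3 := (prevIn (univ \ L) a).isLt
  constructor
  · rintro (rfl | rfl)
    · refine ⟨prevIn_mem haS a, ?_⟩
      simp [cycDist]
    · exact ⟨haS, le_rfl⟩
  · rintro ⟨hxS, hx⟩
    have h := cycGap_prevIn_le hxS a
    rw [Fin.ext_iff, Fin.ext_iff]
    simp only [cycDist, cycGap] at h hx
    split_ifs at h hx <;> omega

/-- The element `𝓛_{ab}` as a second difference, valid also for adjacent `a` and `b`. -/
lemma LElt_pair {L : Finset (Fin n)} {a b : Fin n} (ha : a ∉ L) (hb : b ∉ L) (hab : a ≠ b) :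
    LElt L {a, b} = -(betaV L {a, b} - betaV L {a, prevIn (univ \ L) b}
      - betaV L {prevIn (univ \ L) a, b}
      + betaV L {prevIn (univ \ L) a, prevIn (univ \ L) b}) := by
  have hpa : prevIn (univ \ L) a ≠ a := prevIn_ne (by simpa using hb) hab.symm
  have hpb : prevIn (univ \ L) b ≠ b := prevIn_ne (by simpa using ha) hab
  have hba := betaV_prevIn hb
  have haa := betaV_prevIn ha
  have hsa := betaV_singleton ha
  have hsb := betaV_singleton hb
  have hS0 : shiftSet (univ \ L) {a, b} ∅ = {a, b} := by simp [shiftSet]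
  have hSa : shiftSet (univ \ L) {a, b} {a} = {prevIn (univ \ L) a, b} := by
    ext x; simp only [mem_shiftSet, mem_insert, mem_singleton]; grind
  have hSb : shiftSet (univ \ L) {a, b} {b} = {a, prevIn (univ \ L) b} := by
    ext x; simp only [mem_shiftSet, mem_insert, mem_singleton]; grind
  have hSab : shiftSet (univ \ L) {a, b} {a, b} =
      {prevIn (univ \ L) a, prevIn (univ \ L) b} := by
    ext x; simp only [mem_shiftSet, mem_insert, mem_singleton]; grind
  have hLE : LElt L {a, b} = ∑ T ∈ (initPts (univ \ L) {a, b}).powerset,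
      ((-1 : ℝ) ^ (1 + T.card)) • betaV L (shiftSet (univ \ L) {a, b} T) := rfl
  rw [hLE]
  by_cases h1 : prevIn (univ \ L) a = b <;> by_cases h2 : prevIn (univ \ L) b = a
  · have hpts : initPts (univ \ L) {a, b} = ∅ := by
      ext x; simp only [mem_initPts]; grind
    rw [hpts]
    rw [h2] at hba
    simp [hS0, h1, h2, hba, hsa, hsb, pair_comm b a]
  · have hpts : initPts (univ \ L) {a, b} = {b} := by
      ext x; simp only [mem_initPts]; grind
    rw [hpts, ← insert_empty_eq b, sum_powerset_insert (notMem_empty b)]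
    rw [h1, pair_comm] at haa
    rw [pair_comm] at hba
    simp [hS0, hSb, h1, hba, haa, hsb]
  · have hpts : initPts (univ \ L) {a, b} = {a} := by
      ext x; simp only [mem_initPts]; grind
    rw [hpts, ← insert_empty_eq a, sum_powerset_insert (notMem_empty a)]
    rw [h2] at hba
    simp [hS0, hSa, h2, hba, haa, hsa]
  · have hpts : initPts (univ \ L) {a, b} = {a, b} := by
      ext x; simp only [mem_initPts]; grind
    have hcard : ({a, b} : Finset (Fin n)).card = 2 := card_pair hab
    rw [hpts, sum_powerset_insert (by simpa using hab), ← insert_empty_eq b,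
      sum_powerset_insert (notMem_empty b), sum_powerset_insert (notMem_empty b)]
    simp only [powerset_empty, sum_singleton, insert_empty_eq, hS0, hSa, hSb, hSab, hcard,
      card_empty, card_singleton]
    module

lemma sum_prevIn {V : Type*} [AddCommMonoid V] (S : Finset (Fin n)) (H : Fin n → Fin n → V) :
    ∑ x ∈ S, H x (prevIn S x) = ∑ x ∈ S, H (succIn S x) x :=
  sum_nbij' (prevIn S) (succIn S) (fun x hx => prevIn_mem hx x)
    (fun x hx => (succIn_spec ⟨x, hx⟩ x).1) (fun _ hx => succIn_prevIn hx)
    (fun _ hx => prevIn_succIn hx) fun x hx => by rw [succIn_prevIn hx]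

lemma sum_powersetCard_two {V : Type*} [AddCommMonoid V] (S : Finset (Fin n))
    (F : Finset (Fin n) → V) :
    ∑ J ∈ powersetCard 2 S, F J = ∑ i ∈ S, ∑ j ∈ S, if i < j then F {i, j} else 0 := by
  rw [← sum_product' S S fun i j => if i < j then F {i, j} else 0, ← sum_filter]
  symm
  refine sum_bij (fun q _ => {q.1, q.2}) ?_ ?_ ?_ fun _ _ => rfl
  · rintro ⟨i, j⟩ h
    simp only [mem_filter, mem_product] at h
    refine mem_powersetCard.2 ⟨?_, card_pair h.2.ne⟩
    simp [insert_subset_iff, h.1]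
  · rintro ⟨i, j⟩ h ⟨i', j'⟩ h' heq
    simp only [mem_filter, mem_product] at h h' heq
    have e1 := Finset.ext_iff.1 heq i
    have e2 := Finset.ext_iff.1 heq j
    have e3 := Finset.ext_iff.1 heq i'
    simp only [mem_insert, mem_singleton] at e1 e2 e3
    grind
  · intro J hJ
    obtain ⟨hJS, hcard⟩ := mem_powersetCard.1 hJ
    obtain ⟨a, b, hab, rfl⟩ := card_eq_two.1 hcard
    simp only [insert_subset_iff, singleton_subset_iff] at hJS
    rcases hab.lt_or_gt with h | h
    · exact ⟨(a, b), by simp [hJS, h], rfl⟩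
    · exact ⟨(b, a), by simp [hJS, h], pair_comm b a⟩

lemma two_smul_sum_lt {V : Type*} [AddCommGroup V] [Module ℝ V] (S : Finset (Fin n))
    (G : Fin n → Fin n → V) (hsymm : ∀ i j, G i j = G j i) (hdiag : ∀ i ∈ S, G i i = 0) :
    (2 : ℝ) • ∑ i ∈ S, ∑ j ∈ S, (if i < j then G i j else 0) = ∑ i ∈ S, ∑ j ∈ S, G i j := by
  rw [two_smul]
  nth_rewrite 2 [sum_comm]
  rw [← sum_add_distrib]
  refine sum_congr rfl fun i hi => ?_
  rw [← sum_add_distrib]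
  refine sum_congr rfl fun j hj => ?_
  rcases lt_trichotomy i j with h | rfl | h
  · simp [h, h.not_gt]
  · simp [hdiag i hi]
  · simp [h, h.not_gt, hsymm i j]

/-- Summation by parts: second differences of `g` move to the coefficients `f`. -/
lemma sum_second_difference {V : Type*} [AddCommGroup V] [Module ℝ V] (S : Finset (Fin n))
    (f : Fin n → Fin n → ℝ) (g : Fin n → Fin n → V) :
    ∑ a ∈ S, ∑ b ∈ S, f a b • -(g a b - g a (prevIn S b) - g (prevIn S a) b
        + g (prevIn S a) (prevIn S b)) =
      ∑ i ∈ S, ∑ j ∈ S, (-(f i j - f i (succIn S j) - f (succIn S i) j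
        + f (succIn S i) (succIn S j))) • g i j := by
  have h1 : ∀ a a', ∑ b ∈ S, f a b • g a' (prevIn S b) =
      ∑ b ∈ S, f a (succIn S b) • g a' b := fun a a' =>
    sum_prevIn S fun b b' => f a b • g a' b'
  have h2 : ∑ a ∈ S, ∑ b ∈ S, f a b • g (prevIn S a) b =
      ∑ a ∈ S, ∑ b ∈ S, f (succIn S a) b • g a b :=
    sum_prevIn S fun a a' => ∑ b ∈ S, f a b • g a' b
  have h3 : ∑ a ∈ S, ∑ b ∈ S, f a (succIn S b) • g (prevIn S a) b =
      ∑ a ∈ S, ∑ b ∈ S, f (succIn S a) (succIn S b) • g a b :=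
    sum_prevIn S fun a a' => ∑ b ∈ S, f a (succIn S b) • g a' b
  simp only [smul_neg, smul_add, smul_sub, neg_smul, add_smul, sub_smul, sum_neg_distrib,
    sum_add_distrib, sum_sub_distrib, h1, h2, h3]

end PairExpansion

/-- for weights `c` on `k`-subsets and a `(k−2)`-subset
`L = {ℓ_1 < ⋯ < ℓ_{k−2}}`, the iterated boundary of `Σ_J c_J 𝓛_J` is
`Σ_{{i,j}} ω^{(L)}_{ij} β^{(L)}_{ij}`, the sum over 2-element subsets `{i,j}` of
`S = {1,…,n}∖L` whose elements are not cyclically adjacent in `S`, where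
`ω^{(L)}_{ij} = −(c_{L∪{i,j}} − c_{L∪{i,j⁺}} − c_{L∪{i⁺,j}} + c_{L∪{i⁺,j⁺}})`
with `i⁺, j⁺` the cyclic successors of `i, j` in `S`. -/
theorem stmt14 {n k : ℕ} (hk : 2 ≤ k) (hn : k + 2 ≤ n)
    (c : Finset (Fin n) → ℝ)
    (L : Finset (Fin n)) (hL : L.card = k - 2) :
    bdComp ∅ ((L.sort (· ≤ ·)).reverse)
        (∑ J ∈ powersetCard k (univ : Finset (Fin n)), c J • LElt ∅ J) =
      ∑ i : Fin n, ∑ j : Fin n,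
        (if i ∈ (univ : Finset (Fin n)) \ L ∧ j ∈ (univ : Finset (Fin n)) \ L ∧
            i < j ∧ prevIn (univ \ L) i ≠ j ∧ prevIn (univ \ L) j ≠ i then
          (-(c (L ∪ {i, j}) - c (L ∪ {i, succIn (univ \ L) j})
              - c (L ∪ {succIn (univ \ L) i, j})
              + c (L ∪ {succIn (univ \ L) i, succIn (univ \ L) j}))) • betaV L {i, j}
        else 0) := by
  have hcomp := bdComp_sum_LElt c (m := 2) (by norm_num) (L.sort (· ≤ ·)).reverse ∅
    (List.nodup_reverse.2 (sort_nodup _ _)) (by simp)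
  have hset : (L.sort (· ≤ ·)).reverse.toFinset = L := by
    rw [List.toFinset_reverse, sort_toFinset]
  have hlen : 2 + (L.sort (· ≤ ·)).reverse.length = k := by
    rw [List.length_reverse, length_sort]
    omega
  rw [hset, hlen] at hcomp
  simp only [sdiff_empty, empty_union] at hcomp
  rw [hcomp, sum_powersetCard_two]
  set S := (univ : Finset (Fin n)) \ L with hS
  have hmem : ∀ {x}, x ∈ S → x ∉ L := fun hx => (mem_sdiff.1 hx).2
  set D : Fin n → Fin n → Finset (Fin n) → ℝ := fun a b =>
    -(betaV L {a, b} - betaV L {a, prevIn S b} - betaV L {prevIn S a, b}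
      + betaV L {prevIn S a, prevIn S b}) with hD
  set W : Fin n → Fin n → ℝ := fun i j =>
    -(c (L ∪ {i, j}) - c (L ∪ {i, succIn S j}) - c (L ∪ {succIn S i, j})
      + c (L ∪ {succIn S i, succIn S j})) with hW
  have hleft : ∑ i ∈ S, ∑ j ∈ S, (if i < j then c (L ∪ {i, j}) • LElt L {i, j} else 0) =
      ∑ i ∈ S, ∑ j ∈ S, (if i < j then c (L ∪ {i, j}) • D i j else 0) := by
    refine sum_congr rfl fun i hi => sum_congr rfl fun j hj => ?_
    split_ifs with h
    · rw [LElt_pair (hmem hi) (hmem hj) h.ne]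
    · rfl
  have hright : (∑ i : Fin n, ∑ j : Fin n, if i ∈ S ∧ j ∈ S ∧ i < j ∧ prevIn S i ≠ j ∧
        prevIn S j ≠ i then W i j • betaV L {i, j} else 0) =
      ∑ i ∈ S, ∑ j ∈ S, (if i < j then W i j • betaV L {i, j} else 0) := by
    rw [← sum_subset (subset_univ S) fun i _ hi =>
      sum_eq_zero fun j _ => if_neg fun h => hi h.1]
    refine sum_congr rfl fun i hi => ?_
    rw [← sum_subset (subset_univ S) fun j _ hj => if_neg fun h => hj h.2.1]
    refine sum_congr rfl fun j hj => ?_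
    by_cases hij : prevIn S i = j
    · have h := betaV_prevIn (hmem hi)
      rw [← hS, hij, pair_comm] at h
      simp [h]
    by_cases hji : prevIn S j = i
    · have h := betaV_prevIn (hmem hj)
      rw [← hS, hji] at h
      simp [h]
    simp [hi, hj, hij, hji]
  rw [hleft]
  refine Eq.trans ?_ hright.symm
  refine smul_right_injective _ (two_ne_zero (α := ℝ)) ?_
  simp only
  rw [two_smul_sum_lt S (fun i j => c (L ∪ {i, j}) • D i j),
    two_smul_sum_lt S (fun i j => W i j • betaV L {i, j})]
  · exact sum_second_difference S (fun i j => c (L ∪ {i, j})) fun i j => betaV L {i, j}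
  · intro i j
    simp only [hW, pair_comm j, pair_comm (succIn S j)]
    ring_nf
  · intro i hi
    simp [betaV_singleton (hmem hi)]
  · intro i j
    simp only [hD, pair_comm j, pair_comm (prevIn S j)]
    congr 1
    abel
  · intro i hi
    have h1 := betaV_prevIn (hmem hi)
    have h2 := betaV_singleton (hmem hi)
    have h3 := betaV_singleton (hmem (prevIn_mem hi i))
    rw [← hS] at h1
    simp [hD, h1, h2, h3, pair_comm i]
end
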